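/- arXiv:math/0401309 — 7 statements merged into one kernel-verified Lean document; each statement's English description precedes it below -/
import Mathlib

section
/- Let n ≥ 2 and α ∈ (0,2). For every ε > 0 there exists λ₀ = λ₀(ε, α, n) ∈ (0,1) such that for every bounded open set D ⊆ ℝⁿ, every function u that is α-harmonic in D and positive on D, every y ∈ D, and every z ∈ B(y, λ₀ δ_D(y)), one has (1+ε)^{−1} u(z) ≤ u(y) ≤ (1+ε) u(z). -/
open Metric Set MeasureTheory

/-- The α-stable Poisson kernel of the ball `B(x₀, r)`. -/
noncomputable def stablePoissonKernel (n : ℕ) (α : ℝ) (x₀ : EuclideanSpace ℝ (Fin n))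
    (r : ℝ) (x v : EuclideanSpace ℝ (Fin n)) : ℝ :=
  (Real.Gamma (n / 2) * Real.pi ^ (-(n : ℝ) / 2 - 1) * Real.sin (Real.pi * α / 2)) *
    ((r ^ 2 - dist x x₀ ^ 2) / (dist v x₀ ^ 2 - r ^ 2)) ^ (α / 2) *
    dist x v ^ (-(n : ℝ))

/-- `u : ℝⁿ → [0,∞)` Borel with `∫ u(x)(1+|x|)^{−n−α} dx < ∞` is α-harmonic in the
open set `D` if, for every ball whose closure lies in `D` and every point `x` of the
ball, `∫_{|v−x₀|>r} P_{x₀,r}(x,v) u(v) dv` is finite and equals `u(x)`. -/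
def IsAlphaHarmonic (n : ℕ) (α : ℝ) (D : Set (EuclideanSpace ℝ (Fin n)))
    (u : EuclideanSpace ℝ (Fin n) → ℝ) : Prop :=
  Measurable u ∧ (∀ x, 0 ≤ u x) ∧
    Integrable (fun x => u x * (1 + ‖x‖) ^ (-(n : ℝ) - α)) ∧
    ∀ (x₀ : EuclideanSpace ℝ (Fin n)) (r : ℝ), 0 < r → closedBall x₀ r ⊆ D →
      ∀ x ∈ ball x₀ r,
        IntegrableOn (fun v => stablePoissonKernel n α x₀ r x v * u v)
          {v | r < dist v x₀} ∧
        ∫ v in {v | r < dist v x₀}, stablePoissonKernel n α x₀ r x v * u v = u x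

/-! If `|z - y| ≤ t r` with `t < 1`, then for `|v - y| > r` the kernels `P_{y,r}(y, v)` and
`P_{y,r}(z, v)` differ by a factor at most `(1 - t)^{-(n+1)}`: the distances from `v` contribute
`(1 - t)^{-n}`, and the ratio of the remaining factors is
`(1 - |z - y|²/r²)^{α/2} ≥ 1 - t² ≥ 1 - t`, because `α/2 ≤ 1`. Integrating against `u ≥ 0` transfers
the comparison to `u(y)` and `u(z)`, and by Bernoulli's inequality `t = ε / ((n + 1)(1 + ε))` makes
the factor at most `1 + ε`. -/

theorem mul_rpow_le_rpow_of_mul_le {s a b p : ℝ} (hs₀ : 0 ≤ s) (hs₁ : s ≤ 1) (ha : 0 ≤ a)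
    (hp₀ : 0 ≤ p) (hp₁ : p ≤ 1) (h : s * a ≤ b) : s * a ^ p ≤ b ^ p :=
  calc s * a ^ p ≤ s ^ p * a ^ p := by
        gcongr
        exact Real.self_le_rpow_of_le_one hs₀ hs₁ hp₁
    _ = (s * a) ^ p := (Real.mul_rpow hs₀ ha).symm
    _ ≤ b ^ p := Real.rpow_le_rpow (mul_nonneg hs₀ ha) h hp₀

theorem pow_mul_rpow_neg_natCast_le {s a b : ℝ} (hs : 0 ≤ s) (ha : 0 < a) (hb : 0 < b)
    (h : s * a ≤ b) (n : ℕ) : s ^ n * b ^ (-(n : ℝ)) ≤ a ^ (-(n : ℝ)) := by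
  rw [Real.rpow_neg hb.le, Real.rpow_neg ha.le, Real.rpow_natCast, Real.rpow_natCast,
    ← div_eq_mul_inv, ← one_div, div_le_div_iff₀ (pow_pos hb n) (pow_pos ha n), one_mul, ← mul_pow]
  exact pow_le_pow_left₀ (mul_nonneg hs ha.le) h n

section Distance

variable {X : Type*} [PseudoMetricSpace X] {y z v : X} {r t : ℝ}

theorem one_sub_mul_dist_center_le (ht : 0 ≤ t) (hz : dist z y ≤ t * r) (hv : r ≤ dist y v) :
    (1 - t) * dist y v ≤ dist z v := by
  have htriangle : dist y v ≤ dist z y + dist z v := dist_triangle_left y v z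
  have hzv : dist z y ≤ t * dist y v := hz.trans (by gcongr)
  linarith

theorem one_sub_mul_dist_le_dist_center (ht₀ : 0 ≤ t) (ht₁ : t ≤ 1) (hz : dist z y ≤ t * r)
    (hv : r ≤ dist y v) : (1 - t) * dist z v ≤ dist y v := by
  have hzv : dist z v ≤ (1 + t) * dist y v := by
    have htriangle : dist z v ≤ dist z y + dist y v := dist_triangle z y v
    have : t * r ≤ t * dist y v := by gcongr
    linarith
  calc (1 - t) * dist z v ≤ (1 - t) * ((1 + t) * dist y v) :=
        mul_le_mul_of_nonneg_left hzv (sub_nonneg.2 ht₁)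
    _ = dist y v - t ^ 2 * dist y v := by ring
    _ ≤ dist y v := sub_le_self _ (by positivity)

end Distance

section PoissonKernel

variable {n : ℕ} {α r t : ℝ} {y z v : EuclideanSpace ℝ (Fin n)}

theorem stablePoissonKernel_const_nonneg (n : ℕ) (hα : α ∈ Icc (0 : ℝ) 2) :
    0 ≤ Real.Gamma (n / 2) * Real.pi ^ (-(n : ℝ) / 2 - 1) * Real.sin (Real.pi * α / 2) := by
  have hsin : 0 ≤ Real.sin (Real.pi * α / 2) :=
    Real.sin_nonneg_of_nonneg_of_le_pi
      (div_nonneg (mul_nonneg Real.pi_pos.le hα.1) two_pos.le) (by nlinarith [Real.pi_pos, hα.2])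
  exact mul_nonneg (mul_nonneg (Real.Gamma_nonneg_of_nonneg (by positivity)) (by positivity)) hsin

theorem mul_stablePoissonKernel_le_of_factors_le (hα : α ∈ Icc (0 : ℝ) 2)
    {x x' x₀ : EuclideanSpace ℝ (Fin n)} {a b : ℝ} (hb : 0 ≤ b) (hx' : dist x' x₀ ≤ r)
    (hr : 0 ≤ r) (hv : r < dist v x₀)
    (hratio : a * ((r ^ 2 - dist x x₀ ^ 2) / (dist v x₀ ^ 2 - r ^ 2)) ^ (α / 2) ≤
      ((r ^ 2 - dist x' x₀ ^ 2) / (dist v x₀ ^ 2 - r ^ 2)) ^ (α / 2))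
    (hdist : b * dist x v ^ (-(n : ℝ)) ≤ dist x' v ^ (-(n : ℝ))) :
    a * b * stablePoissonKernel n α x₀ r x v ≤ stablePoissonKernel n α x₀ r x' v := by
  have hratio_nonneg : 0 ≤ (r ^ 2 - dist x' x₀ ^ 2) / (dist v x₀ ^ 2 - r ^ 2) :=
    div_nonneg (sub_nonneg.2 (by gcongr)) (sub_nonneg.2 (by gcongr))
  have hC := stablePoissonKernel_const_nonneg n hα
  unfold stablePoissonKernel
  generalize Real.Gamma (n / 2) * _ * _ = C at hC ⊢
  calc _ = C * (a * ((r ^ 2 - dist x x₀ ^ 2) / (dist v x₀ ^ 2 - r ^ 2)) ^ (α / 2)) *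
        (b * dist x v ^ (-(n : ℝ))) := by ring
    _ ≤ _ := mul_le_mul (mul_le_mul_of_nonneg_left hratio hC) hdist (by positivity) (by positivity)

theorem one_sub_pow_mul_stablePoissonKernel_le_center (hα : α ∈ Icc (0 : ℝ) 2) (ht₀ : 0 ≤ t)
    (ht₁ : t < 1) (hr : 0 < r) (hz : dist z y ≤ t * r) (hv : r < dist v y) :
    (1 - t) ^ n * stablePoissonKernel n α y r z v ≤ stablePoissonKernel n α y r y v := by
  have hs : 0 < 1 - t := sub_pos.2 ht₁
  have hyv : r < dist y v := dist_comm v y ▸ hv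
  have hyv_le : (1 - t) * dist y v ≤ dist z v := one_sub_mul_dist_center_le ht₀ hz hyv.le
  have hdist := pow_mul_rpow_neg_natCast_le hs.le (hr.trans hyv)
    ((mul_pos hs (hr.trans hyv)).trans_le hyv_le) hyv_le n
  have hratio : 1 * ((r ^ 2 - dist z y ^ 2) / (dist v y ^ 2 - r ^ 2)) ^ (α / 2) ≤
      ((r ^ 2 - dist y y ^ 2) / (dist v y ^ 2 - r ^ 2)) ^ (α / 2) := by
    have hzr : dist z y ≤ r := hz.trans (mul_le_of_le_one_left hr.le ht₁.le)
    have hden : 0 ≤ dist v y ^ 2 - r ^ 2 := sub_nonneg.2 (by gcongr)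
    rw [one_mul]
    exact Real.rpow_le_rpow (div_nonneg (sub_nonneg.2 (by gcongr)) hden)
      (div_le_div_of_nonneg_right (by simp) hden) (div_nonneg hα.1 two_pos.le)
  simpa only [one_mul] using mul_stablePoissonKernel_le_of_factors_le hα (pow_nonneg hs.le n)
    (by simpa only [dist_self] using hr.le) hr.le hv hratio hdist

theorem one_sub_pow_succ_mul_stablePoissonKernel_center_le (hα : α ∈ Icc (0 : ℝ) 2) (ht₀ : 0 ≤ t)
    (ht₁ : t < 1) (hr : 0 < r) (hz : dist z y ≤ t * r) (hv : r < dist v y) :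
    (1 - t) ^ (n + 1) * stablePoissonKernel n α y r y v ≤ stablePoissonKernel n α y r z v := by
  have hs : 0 < 1 - t := sub_pos.2 ht₁
  have hyv : r < dist y v := dist_comm v y ▸ hv
  have hzv_pos : 0 < dist z v :=
    (mul_pos hs (hr.trans hyv)).trans_le (one_sub_mul_dist_center_le ht₀ hz hyv.le)
  have hdist := pow_mul_rpow_neg_natCast_le hs.le hzv_pos (hr.trans hyv)
    (one_sub_mul_dist_le_dist_center ht₀ ht₁.le hz hyv.le) n
  have hnum : (1 - t) * r ^ 2 ≤ r ^ 2 - dist z y ^ 2 := by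
    have hsq : dist z y ^ 2 ≤ t ^ 2 * r ^ 2 := mul_pow t r 2 ▸ pow_le_pow_left₀ dist_nonneg hz 2
    have htt : t ^ 2 * r ^ 2 ≤ t * r ^ 2 := by
      gcongr
      exact pow_le_of_le_one ht₀ ht₁.le two_ne_zero
    linarith
  have hratio : (1 - t) * ((r ^ 2 - dist y y ^ 2) / (dist v y ^ 2 - r ^ 2)) ^ (α / 2) ≤
      ((r ^ 2 - dist z y ^ 2) / (dist v y ^ 2 - r ^ 2)) ^ (α / 2) := by
    have hden : 0 ≤ dist v y ^ 2 - r ^ 2 := sub_nonneg.2 (by gcongr)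
    rw [dist_self, zero_pow two_ne_zero, sub_zero]
    refine mul_rpow_le_rpow_of_mul_le hs.le (sub_le_self 1 ht₀) (by positivity)
      (div_nonneg hα.1 two_pos.le) (div_le_one_of_le₀ hα.2 two_pos.le) ?_
    rw [← mul_div_assoc]
    gcongr
  rw [pow_succ']
  exact mul_stablePoissonKernel_le_of_factors_le hα (pow_nonneg hs.le n)
    (hz.trans (mul_le_of_le_one_left hr.le ht₁.le)) hr.le hv hratio hdist

end PoissonKernel

namespace IsAlphaHarmonic

variable {n : ℕ} {α r t : ℝ} {D : Set (EuclideanSpace ℝ (Fin n))}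
  {u : EuclideanSpace ℝ (Fin n) → ℝ} {y z : EuclideanSpace ℝ (Fin n)}

theorem mul_le_of_mul_stablePoissonKernel_le (hu : IsAlphaHarmonic n α D u) (hr : 0 < r)
    {x₀ : EuclideanSpace ℝ (Fin n)} (hD : closedBall x₀ r ⊆ D) (hy : y ∈ ball x₀ r)
    (hz : z ∈ ball x₀ r) {c : ℝ}
    (hc : ∀ v, r < dist v x₀ →
      c * stablePoissonKernel n α x₀ r y v ≤ stablePoissonKernel n α x₀ r z v) :
    c * u y ≤ u z := by
  obtain ⟨-, hu_nonneg, -, hu_poisson⟩ := hu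
  obtain ⟨hy_int, hy_eq⟩ := hu_poisson x₀ r hr hD y hy
  obtain ⟨hz_int, hz_eq⟩ := hu_poisson x₀ r hr hD z hz
  have hmeas : MeasurableSet {v | r < dist v x₀} :=
    measurableSet_lt measurable_const (by fun_prop)
  rw [← hy_eq, ← hz_eq, ← integral_const_mul]
  refine setIntegral_mono_on (hy_int.const_mul c) hz_int hmeas fun v hv ↦ ?_
  rw [← mul_assoc]
  exact mul_le_mul_of_nonneg_right (hc v hv) (hu_nonneg v)

theorem harnack (hu : IsAlphaHarmonic n α D u) (hα : α ∈ Icc (0 : ℝ) 2) (ht₀ : 0 ≤ t)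
    (ht₁ : t < 1) (hr : 0 < r) (hD : closedBall y r ⊆ D) (hz : dist z y ≤ t * r) :
    (1 - t) ^ n * u z ≤ u y ∧ (1 - t) ^ (n + 1) * u y ≤ u z := by
  have hy_mem : y ∈ ball y r := mem_ball_self hr
  have hz_mem : z ∈ ball y r := hz.trans_lt (mul_lt_of_lt_one_left hr ht₁)
  exact ⟨hu.mul_le_of_mul_stablePoissonKernel_le hr hD hz_mem hy_mem fun _ hv ↦
      one_sub_pow_mul_stablePoissonKernel_le_center hα ht₀ ht₁ hr hz hv,
    hu.mul_le_of_mul_stablePoissonKernel_le hr hD hy_mem hz_mem fun _ hv ↦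
      one_sub_pow_succ_mul_stablePoissonKernel_center_le hα ht₀ ht₁ hr hz hv⟩

end IsAlphaHarmonic

theorem exists_inv_one_add_le_one_sub_pow (m : ℕ) {ε : ℝ} (hε : 0 < ε) :
    ∃ t ∈ Ioo (0 : ℝ) 1, (1 + ε)⁻¹ ≤ (1 - t) ^ (m + 1) := by
  have ht₁ : ε / ((m + 1) * (1 + ε)) < 1 := by
    rw [div_lt_one (by positivity)]
    nlinarith [(Nat.cast_nonneg m : (0 : ℝ) ≤ m)]
  refine ⟨ε / ((m + 1) * (1 + ε)), ⟨by positivity, ht₁⟩, ?_⟩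
  calc (1 + ε)⁻¹ = 1 + (m + 1 : ℕ) * -(ε / ((m + 1) * (1 + ε))) := by
        push_cast
        field_simp
        ring
    _ ≤ (1 + -(ε / ((m + 1) * (1 + ε)))) ^ (m + 1) := one_add_mul_le_pow (by linarith) _
    _ = (1 - ε / ((m + 1) * (1 + ε))) ^ (m + 1) := by rw [← sub_eq_add_neg]

theorem stmt3_general (n : ℕ) {ε : ℝ} (hε : 0 < ε) :
    ∃ lam₀ ∈ Ioo (0 : ℝ) 1, ∀ α ∈ Ioo (0 : ℝ) 2,
      ∀ (D : Set (EuclideanSpace ℝ (Fin n))) (u : EuclideanSpace ℝ (Fin n) → ℝ),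
        IsAlphaHarmonic n α D u →
          ∀ (y : EuclideanSpace ℝ (Fin n)) (R : ℝ), ball y R ⊆ D → ∀ z ∈ ball y (lam₀ * R),
            (1 + ε)⁻¹ * u z ≤ u y ∧ u y ≤ (1 + ε) * u z := by
  obtain ⟨t, ht, hpow⟩ := exists_inv_one_add_le_one_sub_pow n hε
  refine ⟨t, ht, fun α hα D u hu y R hD z hz ↦ ?_⟩
  have hu_nonneg : ∀ x, 0 ≤ u x := hu.2.1
  obtain ⟨r, hr, hrR⟩ : ∃ r, dist z y / t < r ∧ r < R :=
    exists_between ((div_lt_iff₀' ht.1).2 hz)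
  have hr_pos : 0 < r := (div_nonneg dist_nonneg ht.1.le).trans_lt hr
  obtain ⟨hzy, hyz⟩ := hu.harnack (Ioo_subset_Icc_self hα) ht.1.le ht.2 hr_pos
    ((closedBall_subset_ball hrR).trans hD) ((div_lt_iff₀' ht.1).1 hr).le
  have hpow' : (1 + ε)⁻¹ ≤ (1 - t) ^ n :=
    hpow.trans (pow_le_pow_of_le_one (by linarith [ht.2]) (by linarith [ht.1]) n.le_succ)
  exact ⟨(mul_le_mul_of_nonneg_right hpow' (hu_nonneg z)).trans hzy,
    (inv_mul_le_iff₀ (by positivity)).1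
      ((mul_le_mul_of_nonneg_right hpow (hu_nonneg y)).trans hyz)⟩

/-- for every `ε > 0` there exists `λ₀ = λ₀(ε,α,n) ∈ (0,1)` such that for
every bounded open `D`, every positive α-harmonic `u` on `D`, every `y ∈ D` and every
`z ∈ B(y, λ₀ δ_D(y))`, one has `(1+ε)⁻¹ u(z) ≤ u(y) ≤ (1+ε) u(z)`. -/
theorem stmt3 (n : ℕ) (hn : 2 ≤ n) (α : ℝ) (hα : α ∈ Set.Ioo (0 : ℝ) 2)
    (ε : ℝ) (hε : 0 < ε) :
    ∃ lam₀ ∈ Set.Ioo (0 : ℝ) 1,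
      ∀ D : Set (EuclideanSpace ℝ (Fin n)), IsOpen D → Bornology.IsBounded D →
        ∀ u : EuclideanSpace ℝ (Fin n) → ℝ, IsAlphaHarmonic n α D u →
          (∀ x ∈ D, 0 < u x) →
          ∀ y ∈ D, ∀ z ∈ ball y (lam₀ * Metric.infDist y Dᶜ),
            (1 + ε)⁻¹ * u z ≤ u y ∧ u y ≤ (1 + ε) * u z := by
  obtain ⟨lam₀, hlam₀, harnack⟩ := stmt3_general n hε
  exact ⟨lam₀, hlam₀, fun D _ _ u hu _ y _ ↦ harnack α hα D u hu y _ ball_infDist_compl_subset⟩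
end

section
/- (Harnack principle for the fractional Laplacian.) Let n ≥ 2 and α ∈ (0,2). There exists a constant J = J(n, α) ≥ 1 such that for every M ≥ 1, every r > 0, all x₁, x₂ ∈ ℝⁿ with |x₁ − x₂| < M r, and every function u that is nonnegative and α-harmonic in the open set B(x₁, r) ∪ B(x₂, r), one has J^{−1} M^{−(n+α)} u(x₂) ≤ u(x₁) ≤ J M^{n+α} u(x₂). -/
open Metric Set MeasureTheory

/-!
Every value `u x` in a ball is an average of the exterior values of `u` against the Poisson kernel,
so two estimates of that kernel suffice. The kernel at `x` is at most `(R / (R - |x - x₀|)) ^ n`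
times the kernel at the centre `x₀`; this gives the Harnack inequality inside one ball and settles
the case where `x₁` and `x₂` are close together. When they are far apart, the kernel of `B(x₂, ρ)`
is, unlike that of the Laplacian, bounded below on the whole ball `B(x₁, ρ)`, where `u` is at least
a multiple of `u x₁` by the first estimate. Jumping from `x₂` into `B(x₁, ρ)` costs the factor
`(ρ / L) ^ (n + α)` with `L ≈ |x₁ - x₂|`, whence the power of `M`; no chain of balls joining `x₁`
to `x₂` is needed.
-/

/-- The normalising constant `C(n, α)` of the stable Poisson kernel. -/
noncomputable def stablePoissonConst (n : ℕ) (α : ℝ) : ℝ :=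
  Real.Gamma (n / 2) * Real.pi ^ (-(n : ℝ) / 2 - 1) * Real.sin (Real.pi * α / 2)

/-- The scale-free part of the cost of jumping from the centre of one ball of radius `ρ` into a
second one at distance about `L`: the value at the first centre is at least
`stableJumpConst n α * (ρ / L) ^ (n + α)` times the value at the second. The factor `2 ^ n` bounds
the value at the second centre by those nearby. -/
noncomputable def stableJumpConst (n : ℕ) (α : ℝ) : ℝ :=
  stablePoissonConst n α * volume.real (ball (0 : EuclideanSpace ℝ (Fin n)) 1) / 2 ^ n

/-- An explicit Harnack constant `J(n, α)`: the first summand serves points at distance less than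
`r / 2`, the second one all other points. -/
noncomputable def stableHarnackConst (n : ℕ) (α : ℝ) : ℝ :=
  3 ^ n + 8 ^ (n + α) / stableJumpConst n α

lemma addHaar_real_ball_eq_pow_mul {E : Type*} [NormedAddCommGroup E] [NormedSpace ℝ E]
    [MeasurableSpace E] [BorelSpace E] [FiniteDimensional ℝ E] (μ : Measure E)
    [μ.IsAddHaarMeasure] (x : E) {r : ℝ} (hr : 0 < r) :
    μ.real (ball x r) = r ^ Module.finrank ℝ E * μ.real (ball 0 1) := by
  rw [measureReal_def, Measure.addHaar_ball_of_pos μ x hr, ENNReal.toReal_mul,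
    ENNReal.toReal_ofReal (by positivity), measureReal_def]

section Constants

variable {n : ℕ} {α : ℝ}

lemma sin_pi_mul_div_two_pos (hα : α ∈ Ioo (0 : ℝ) 2) : 0 < Real.sin (Real.pi * α / 2) := by
  have hα_pos := hα.1
  apply Real.sin_pos_of_pos_of_lt_pi
  · positivity
  · nlinarith [hα.2, Real.pi_pos]

lemma stablePoissonConst_nonneg (hα : α ∈ Ioo (0 : ℝ) 2) : 0 ≤ stablePoissonConst n α := by
  have hΓ : 0 ≤ Real.Gamma (n / 2) := Real.Gamma_nonneg_of_nonneg (by positivity)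
  have hsin := sin_pi_mul_div_two_pos hα
  exact mul_nonneg (mul_nonneg hΓ (by positivity)) hsin.le

lemma stablePoissonConst_pos (hn : n ≠ 0) (hα : α ∈ Ioo (0 : ℝ) 2) :
    0 < stablePoissonConst n α := by
  have hΓ : 0 < Real.Gamma (n / 2) := Real.Gamma_pos_of_pos (by positivity)
  have hsin := sin_pi_mul_div_two_pos hα
  exact mul_pos (mul_pos hΓ (by positivity)) hsin

lemma stableJumpConst_pos (hn : n ≠ 0) (hα : α ∈ Ioo (0 : ℝ) 2) : 0 < stableJumpConst n α := by
  have hC := stablePoissonConst_pos hn hα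
  have hball : 0 < volume.real (ball (0 : EuclideanSpace ℝ (Fin n)) 1) :=
    ENNReal.toReal_pos (measure_ball_pos _ _ one_pos).ne' measure_ball_lt_top.ne
  unfold stableJumpConst
  positivity

lemma three_pow_le_stableHarnackConst (hn : n ≠ 0) (hα : α ∈ Ioo (0 : ℝ) 2) :
    3 ^ n ≤ stableHarnackConst n α := by
  have hjump := stableJumpConst_pos hn hα
  exact le_add_of_nonneg_right (by positivity)

lemma one_le_stableHarnackConst (hn : n ≠ 0) (hα : α ∈ Ioo (0 : ℝ) 2) :
    1 ≤ stableHarnackConst n α :=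
  (one_le_pow₀ (by norm_num)).trans (three_pow_le_stableHarnackConst hn hα)

end Constants

section Kernel

variable {n : ℕ} {α R : ℝ} {x₀ x v : EuclideanSpace ℝ (Fin n)}

lemma stablePoissonKernel_eq (n : ℕ) (α : ℝ) (x₀ : EuclideanSpace ℝ (Fin n)) (R : ℝ)
    (x v : EuclideanSpace ℝ (Fin n)) :
    stablePoissonKernel n α x₀ R x v = stablePoissonConst n α *
      ((R ^ 2 - dist x x₀ ^ 2) / (dist v x₀ ^ 2 - R ^ 2)) ^ (α / 2) * (dist x v ^ n)⁻¹ := by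
  rw [stablePoissonKernel, stablePoissonConst, Real.rpow_neg dist_nonneg, Real.rpow_natCast]

lemma stablePoissonKernel_nonneg (hα : α ∈ Ioo (0 : ℝ) 2) (hx : dist x x₀ ≤ R)
    (hv : R ≤ dist v x₀) : 0 ≤ stablePoissonKernel n α x₀ R x v := by
  have hR : 0 ≤ R := dist_nonneg.trans hx
  have hnum : 0 ≤ R ^ 2 - dist x x₀ ^ 2 := sub_nonneg.2 (by gcongr)
  have hden : 0 ≤ dist v x₀ ^ 2 - R ^ 2 := sub_nonneg.2 (by gcongr)
  have hC := stablePoissonConst_nonneg (n := n) hα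
  rw [stablePoissonKernel_eq]
  positivity

lemma dist_center_le_mul_dist (hx : dist x x₀ < R) (hv : R ≤ dist v x₀) :
    dist x₀ v ≤ R / (R - dist x x₀) * dist x v := by
  have htri : dist v x₀ ≤ dist x v + dist x x₀ := by
    simpa only [dist_comm v x] using dist_triangle v x x₀
  have hx₀ : 0 ≤ dist x x₀ := dist_nonneg
  rw [dist_comm x₀ v, div_mul_eq_mul_div, le_div_iff₀ (sub_pos.2 hx)]
  nlinarith

lemma stablePoissonKernel_le_mul_center (hα : α ∈ Ioo (0 : ℝ) 2) (hx : dist x x₀ < R)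
    (hv : R < dist v x₀) :
    stablePoissonKernel n α x₀ R x v ≤
      (R / (R - dist x x₀)) ^ n * stablePoissonKernel n α x₀ R x₀ v := by
  have hR : 0 < R := dist_nonneg.trans_lt hx
  have hgap : 0 < R - dist x x₀ := sub_pos.2 hx
  have hden : 0 < dist v x₀ ^ 2 - R ^ 2 := sub_pos.2 (by gcongr)
  have hnum : 0 ≤ R ^ 2 - dist x x₀ ^ 2 := sub_nonneg.2 (by gcongr)
  have hC := stablePoissonConst_nonneg (n := n) hα
  have hα₀ : 0 ≤ α / 2 := by linarith [hα.1]
  have hratio : ((R ^ 2 - dist x x₀ ^ 2) / (dist v x₀ ^ 2 - R ^ 2)) ^ (α / 2) ≤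
      (R ^ 2 / (dist v x₀ ^ 2 - R ^ 2)) ^ (α / 2) := by
    gcongr
    exact sub_le_self _ (sq_nonneg _)
  have hdist₀ : 0 < dist x₀ v := by rw [dist_comm]; exact hR.trans hv
  have hdist : (dist x v ^ n)⁻¹ ≤ (R / (R - dist x x₀)) ^ n * (dist x₀ v ^ n)⁻¹ := by
    have hdist_pos : 0 < dist x v :=
      pos_of_mul_pos_right (hdist₀.trans_le (dist_center_le_mul_dist hx hv.le))
        (div_pos hR hgap).le
    rw [inv_le_iff_one_le_mul₀ (by positivity), mul_right_comm, ← mul_pow,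
      ← div_eq_mul_inv, one_le_div (by positivity)]
    gcongr
    exact dist_center_le_mul_dist hx hv.le
  rw [stablePoissonKernel_eq, stablePoissonKernel_eq, dist_self, zero_pow two_ne_zero, sub_zero]
  calc _ ≤ stablePoissonConst n α * (R ^ 2 / (dist v x₀ ^ 2 - R ^ 2)) ^ (α / 2) *
        ((R / (R - dist x x₀)) ^ n * (dist x₀ v ^ n)⁻¹) := by gcongr
    _ = _ := by ring

lemma le_stablePoissonKernel_center {L : ℝ} (hα : α ∈ Ioo (0 : ℝ) 2) (hR : 0 < R)
    (hv : R < dist v x₀) (hL : dist v x₀ ≤ L) :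
    stablePoissonConst n α * (R / L) ^ α * (L ^ n)⁻¹ ≤ stablePoissonKernel n α x₀ R x₀ v := by
  have hdist : 0 < dist v x₀ := hR.trans hv
  have hL₀ : 0 < L := hdist.trans_le hL
  have hden : 0 < dist v x₀ ^ 2 - R ^ 2 := sub_pos.2 (by gcongr)
  have hC := stablePoissonConst_nonneg (n := n) hα
  have hα₀ : 0 ≤ α / 2 := by linarith [hα.1]
  have hratio : (R / L) ^ α ≤ (R ^ 2 / (dist v x₀ ^ 2 - R ^ 2)) ^ (α / 2) := by
    calc (R / L) ^ α = (R ^ 2 / L ^ 2) ^ (α / 2) := by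
          rw [← div_pow, ← Real.rpow_natCast_mul (by positivity)]
          congr 1
          push_cast
          ring
      _ ≤ _ := by
          gcongr
          exact (sub_le_self _ (sq_nonneg R)).trans (by gcongr)
  rw [stablePoissonKernel_eq, dist_self, zero_pow two_ne_zero, sub_zero, dist_comm x₀ v]
  gcongr

end Kernel

namespace IsAlphaHarmonic

variable {n : ℕ} {α R ρ L : ℝ} {D : Set (EuclideanSpace ℝ (Fin n))}
  {u : EuclideanSpace ℝ (Fin n) → ℝ} {x₀ x y x₁ x₂ : EuclideanSpace ℝ (Fin n)}

lemma nonneg (hu : IsAlphaHarmonic n α D u) (x : EuclideanSpace ℝ (Fin n)) : 0 ≤ u x :=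
  hu.2.1 x

lemma integrableOn_kernel_mul (hu : IsAlphaHarmonic n α D u) (hD : closedBall x₀ R ⊆ D)
    (hx : x ∈ ball x₀ R) :
    IntegrableOn (fun v ↦ stablePoissonKernel n α x₀ R x v * u v) {v | R < dist v x₀} :=
  (hu.2.2.2 x₀ R (pos_of_mem_ball hx) hD x hx).1

lemma setIntegral_kernel_mul (hu : IsAlphaHarmonic n α D u) (hD : closedBall x₀ R ⊆ D)
    (hx : x ∈ ball x₀ R) :
    ∫ v in {v | R < dist v x₀}, stablePoissonKernel n α x₀ R x v * u v = u x :=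
  (hu.2.2.2 x₀ R (pos_of_mem_ball hx) hD x hx).2

lemma le_mul_of_kernel_le_mul (hu : IsAlphaHarmonic n α D u) (hD : closedBall x₀ R ⊆ D)
    (hx : x ∈ ball x₀ R) (hy : y ∈ ball x₀ R) {k : ℝ}
    (hk : ∀ v, R < dist v x₀ →
      stablePoissonKernel n α x₀ R x v ≤ k * stablePoissonKernel n α x₀ R y v) :
    u x ≤ k * u y := by
  rw [← hu.setIntegral_kernel_mul hD hx, ← hu.setIntegral_kernel_mul hD hy, ← integral_const_mul]
  refine setIntegral_mono_on (hu.integrableOn_kernel_mul hD hx)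
    ((hu.integrableOn_kernel_mul hD hy).const_mul k)
    (measurableSet_lt measurable_const (measurable_id.dist measurable_const)) fun v hv ↦ ?_
  rw [← mul_assoc]
  exact mul_le_mul_of_nonneg_right (hk v hv) (hu.nonneg v)

lemma measureReal_mul_le (hα : α ∈ Ioo (0 : ℝ) 2) (hu : IsAlphaHarmonic n α D u)
    (hD : closedBall x₀ R ⊆ D) (hx : x ∈ ball x₀ R) {A : Set (EuclideanSpace ℝ (Fin n))}
    (hA : MeasurableSet A) (hA_fin : volume A ≠ ⊤) (hA_sub : A ⊆ {v | R < dist v x₀}) {c : ℝ}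
    (hc : ∀ v ∈ A, c ≤ stablePoissonKernel n α x₀ R x v * u v) :
    volume.real A * c ≤ u x := by
  have hint := hu.integrableOn_kernel_mul hD hx
  have hext : MeasurableSet {v | R < dist v x₀} :=
    measurableSet_lt measurable_const (measurable_id.dist measurable_const)
  calc volume.real A * c = ∫ _ in A, c := by rw [setIntegral_const, smul_eq_mul]
    _ ≤ ∫ v in A, stablePoissonKernel n α x₀ R x v * u v :=
        setIntegral_mono_on (integrableOn_const hA_fin) (hint.mono_set hA_sub) hA hc
    _ ≤ ∫ v in {v | R < dist v x₀}, stablePoissonKernel n α x₀ R x v * u v := by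
        refine setIntegral_mono_set hint ?_ hA_sub.eventuallyLE
        filter_upwards [ae_restrict_mem hext] with v hv
        exact mul_nonneg (stablePoissonKernel_nonneg hα (mem_ball.1 hx).le (le_of_lt hv))
          (hu.nonneg v)
    _ = u x := hu.setIntegral_kernel_mul hD hx

lemma le_mul_center (hα : α ∈ Ioo (0 : ℝ) 2) (hu : IsAlphaHarmonic n α D u)
    (hD : closedBall x₀ R ⊆ D) (hx : x ∈ ball x₀ R) :
    u x ≤ (R / (R - dist x x₀)) ^ n * u x₀ :=
  hu.le_mul_of_kernel_le_mul hD hx (mem_ball_self (pos_of_mem_ball hx)) fun _ hv ↦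
    stablePoissonKernel_le_mul_center hα hx hv

lemma center_le_two_pow_mul (hα : α ∈ Ioo (0 : ℝ) 2) (hu : IsAlphaHarmonic n α D u)
    (hD : closedBall x₀ (3 * ρ) ⊆ D) (hx : x ∈ ball x₀ ρ) : u x₀ ≤ 2 ^ n * u x := by
  have hx' : dist x₀ x < ρ := mem_ball'.1 hx
  have hρ : 0 < ρ := pos_of_mem_ball hx
  have hsub : closedBall x (2 * ρ) ⊆ D :=
    (closedBall_subset_closedBall' (by linarith [mem_ball.1 hx])).trans hD
  calc u x₀ ≤ (2 * ρ / (2 * ρ - dist x₀ x)) ^ n * u x :=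
        hu.le_mul_center hα hsub (mem_ball.2 (by linarith))
    _ ≤ 2 ^ n * u x := by
        have hgap : 0 < 2 * ρ - dist x₀ x := by linarith
        have hux := hu.nonneg x
        gcongr
        rw [div_le_iff₀ hgap]
        linarith

lemma stableJumpConst_mul_le (hα : α ∈ Ioo (0 : ℝ) 2) (hu : IsAlphaHarmonic n α D u) (hρ : 0 < ρ)
    (hD₁ : closedBall x₁ (3 * ρ) ⊆ D) (hD₂ : closedBall x₂ ρ ⊆ D)
    (hfar : 2 * ρ ≤ dist x₁ x₂) (hL : dist x₁ x₂ + ρ ≤ L) :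
    stableJumpConst n α * (ρ / L) ^ (n + α) * u x₁ ≤ u x₂ := by
  have hL₀ : 0 < L := by linarith
  have hsub : ball x₁ ρ ⊆ {v | ρ < dist v x₂} := fun v hv ↦ by
    rw [mem_ofPred]
    linarith [dist_triangle_left x₁ x₂ v, mem_ball.1 hv]
  have hintegrand : ∀ v ∈ ball x₁ ρ,
      stablePoissonConst n α * (ρ / L) ^ α * (L ^ n)⁻¹ * (u x₁ / 2 ^ n) ≤
        stablePoissonKernel n α x₂ ρ x₂ v * u v := fun v hv ↦ by
    have hvL : dist v x₂ ≤ L := by linarith [dist_triangle v x₁ x₂, mem_ball.1 hv]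
    have hu₁ := hu.nonneg x₁
    refine mul_le_mul (le_stablePoissonKernel_center hα hρ (hsub hv) hvL) ?_ (by positivity)
      (stablePoissonKernel_nonneg hα (by simpa using hρ.le) (le_of_lt (hsub hv)))
    rw [div_le_iff₀' (by positivity)]
    exact hu.center_le_two_pow_mul hα hD₁ hv
  calc stableJumpConst n α * (ρ / L) ^ (n + α) * u x₁
      = volume.real (ball x₁ ρ) *
          (stablePoissonConst n α * (ρ / L) ^ α * (L ^ n)⁻¹ * (u x₁ / 2 ^ n)) := by
        rw [addHaar_real_ball_eq_pow_mul _ _ hρ, finrank_euclideanSpace_fin, stableJumpConst,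
          Real.rpow_add (by positivity), Real.rpow_natCast, div_pow]
        ring
    _ ≤ u x₂ := hu.measureReal_mul_le hα hD₂ (mem_ball_self hρ) measurableSet_ball
        measure_ball_lt_top.ne hsub hintegrand

variable {M r : ℝ}

lemma le_three_pow_mul_of_near (hα : α ∈ Ioo (0 : ℝ) 2) (hu : IsAlphaHarmonic n α D u)
    (hr : 0 < r) (hD : ball x₂ r ⊆ D) (hnear : dist x₁ x₂ ≤ r / 2) : u x₁ ≤ 3 ^ n * u x₂ := by
  have hsub : closedBall x₂ (3 / 4 * r) ⊆ D :=
    (closedBall_subset_ball (by linarith)).trans hD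
  calc u x₁ ≤ (3 / 4 * r / (3 / 4 * r - dist x₁ x₂)) ^ n * u x₂ :=
        hu.le_mul_center hα hsub (mem_ball.2 (by linarith))
    _ ≤ 3 ^ n * u x₂ := by
        have hgap : 0 < 3 / 4 * r - dist x₁ x₂ := by linarith
        have hux := hu.nonneg x₂
        gcongr
        rw [div_le_iff₀ hgap]
        linarith

lemma le_rpow_mul_of_far (hn : n ≠ 0) (hα : α ∈ Ioo (0 : ℝ) 2) (hu : IsAlphaHarmonic n α D u)
    (hM : 1 ≤ M) (hr : 0 < r) (hD₁ : ball x₁ r ⊆ D) (hD₂ : ball x₂ r ⊆ D)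
    (hfar : r / 2 ≤ dist x₁ x₂) (hdist : dist x₁ x₂ ≤ M * r) :
    u x₁ ≤ 8 ^ (n + α) / stableJumpConst n α * M ^ (n + α) * u x₂ := by
  have hM₀ : 0 < M := by linarith
  have hjump := stableJumpConst_pos hn hα
  have hbound : stableJumpConst n α * (r / 4 / (2 * M * r)) ^ (n + α) * u x₁ ≤ u x₂ :=
    hu.stableJumpConst_mul_le hα (by positivity)
      ((closedBall_subset_ball (by linarith)).trans hD₁)
      ((closedBall_subset_ball (by linarith)).trans hD₂) (by linarith) (by nlinarith)
  have hscale : r / 4 / (2 * M * r) = (8 * M)⁻¹ := by field_simp; norm_num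
  rw [hscale, Real.inv_rpow (by positivity), Real.mul_rpow (by norm_num) hM₀.le,
    ← div_eq_mul_inv, div_mul_eq_mul_div, div_le_iff₀ (by positivity)] at hbound
  rw [div_mul_eq_mul_div, div_mul_eq_mul_div, le_div_iff₀ hjump]
  linarith

lemma le_stableHarnackConst_mul (hn : n ≠ 0) (hα : α ∈ Ioo (0 : ℝ) 2)
    (hu : IsAlphaHarmonic n α D u) (hM : 1 ≤ M) (hr : 0 < r) (hD₁ : ball x₁ r ⊆ D)
    (hD₂ : ball x₂ r ⊆ D) (hdist : dist x₁ x₂ ≤ M * r) :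
    u x₁ ≤ stableHarnackConst n α * M ^ (n + α) * u x₂ := by
  have hu₂ := hu.nonneg x₂
  have hα₀ := hα.1
  rcases le_total (dist x₁ x₂) (r / 2) with hnear | hfar
  · calc u x₁ ≤ 3 ^ n * u x₂ := hu.le_three_pow_mul_of_near hα hr hD₂ hnear
      _ ≤ stableHarnackConst n α * M ^ (n + α) * u x₂ := by
          have hJ := three_pow_le_stableHarnackConst hn hα
          have hMpow : 1 ≤ M ^ (n + α) := Real.one_le_rpow hM (by positivity)
          gcongr
          exact hJ.trans (le_mul_of_one_le_right (le_trans (by positivity) hJ) hMpow)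
  · calc u x₁ ≤ 8 ^ (n + α) / stableJumpConst n α * M ^ (n + α) * u x₂ :=
          hu.le_rpow_mul_of_far hn hα hM hr hD₁ hD₂ hfar hdist
      _ ≤ stableHarnackConst n α * M ^ (n + α) * u x₂ := by
          gcongr
          exact le_add_of_nonneg_left (by positivity)

end IsAlphaHarmonic

theorem stmt4_general (n : ℕ) (hn : n ≠ 0) (α : ℝ) (hα : α ∈ Set.Ioo (0 : ℝ) 2) :
    ∃ J : ℝ, 1 ≤ J ∧
      ∀ M : ℝ, 1 ≤ M → ∀ r : ℝ, 0 < r →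
        ∀ x₁ x₂ : EuclideanSpace ℝ (Fin n), dist x₁ x₂ < M * r →
          ∀ u : EuclideanSpace ℝ (Fin n) → ℝ,
            IsAlphaHarmonic n α (ball x₁ r ∪ ball x₂ r) u →
            J⁻¹ * M ^ (-((n : ℝ) + α)) * u x₂ ≤ u x₁ ∧
              u x₁ ≤ J * M ^ ((n : ℝ) + α) * u x₂ := by
  have hJ := one_le_stableHarnackConst hn hα
  refine ⟨stableHarnackConst n α, hJ, fun M hM r hr x₁ x₂ hdist u hu ↦ ⟨?_, ?_⟩⟩
  · have hM₀ : 0 < M := by linarith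
    rw [Real.rpow_neg hM₀.le, ← mul_inv, inv_mul_le_iff₀ (by positivity)]
    exact hu.le_stableHarnackConst_mul hn hα hM hr subset_union_right subset_union_left
      (dist_comm x₁ x₂ ▸ hdist.le)
  · exact hu.le_stableHarnackConst_mul hn hα hM hr subset_union_left subset_union_right hdist.le

/-- Harnack principle for the fractional Laplacian: there is
`J = J(n,α) ≥ 1` such that for all `M ≥ 1`, `r > 0`, `x₁, x₂` with `|x₁−x₂| < Mr`,
and every `u ≥ 0` α-harmonic in `B(x₁,r) ∪ B(x₂,r)`,
`J⁻¹ M^{−(n+α)} u(x₂) ≤ u(x₁) ≤ J M^{n+α} u(x₂)`. -/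
theorem stmt4 (n : ℕ) (hn : 2 ≤ n) (α : ℝ) (hα : α ∈ Set.Ioo (0 : ℝ) 2) :
    ∃ J : ℝ, 1 ≤ J ∧
      ∀ M : ℝ, 1 ≤ M → ∀ r : ℝ, 0 < r →
        ∀ x₁ x₂ : EuclideanSpace ℝ (Fin n), dist x₁ x₂ < M * r →
          ∀ u : EuclideanSpace ℝ (Fin n) → ℝ,
            IsAlphaHarmonic n α (ball x₁ r ∪ ball x₂ r) u →
            J⁻¹ * M ^ (-((n : ℝ) + α)) * u x₂ ≤ u x₁ ∧
              u x₁ ≤ J * M ^ ((n : ℝ) + α) * u x₂ := by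
  exact stmt4_general n (by lia) α hα
end

section
/- Let θ₀, θ ∈ ℝ and λ, ρ, δ ∈ ℝ satisfy 0 < λ < |θ₀ − θ| ≤ π, 0 < ρ < 1, and (1−ρ)/λ < δ < 2/π. Then the complex numbers ρe^{iθ₀} and e^{iθ} satisfy |ρe^{iθ₀} − e^{iθ}| ≥ (2/π − δ) |θ₀ − θ|. -/
/-!
By Jordan's inequality, two points of the unit circle whose arguments differ by `t ≤ π` are at
distance `2 sin (t / 2) ≥ (2 / π) t`. Scaling one of them by `ρ` moves it by `|1 - ρ|`, which is
less than `δ λ`, and hence less than `δ t`.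
-/

open Complex in
theorem norm_exp_ofReal_mul_I_sub_exp_ofReal_mul_I (x y : ℝ) :
    ‖exp (x * I) - exp (y * I)‖ = 2 * |Real.sin ((x - y) / 2)| := by
  have factor : exp (x * I) - exp (y * I) = exp (y * I) * (exp (I * (x - y : ℝ)) - 1) := by
    rw [mul_sub, ← exp_add, mul_one]
    congr 2
    push_cast
    ring
  rw [factor, norm_mul, norm_exp_ofReal_mul_I, one_mul, norm_exp_I_mul_ofReal_sub_one,
    norm_mul, Real.norm_ofNat, Real.norm_eq_abs]

open Complex in
theorem two_div_pi_mul_abs_sub_le_norm_exp_sub_exp {x y : ℝ} (hxy : |x - y| ≤ Real.pi) :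
    2 / Real.pi * |x - y| ≤ ‖exp (x * I) - exp (y * I)‖ := by
  have half_abs : |(x - y) / 2| = |x - y| / 2 := by rw [abs_div, abs_two]
  have jordan : 2 / Real.pi * |(x - y) / 2| ≤ |Real.sin ((x - y) / 2)| :=
    Real.mul_abs_le_abs_sin (by linarith)
  rw [norm_exp_ofReal_mul_I_sub_exp_ofReal_mul_I]
  rw [half_abs] at jordan
  linarith

theorem norm_sub_sub_le_norm_smul_sub {R E : Type*} [SeminormedRing R] [SeminormedAddCommGroup E]
    [Module R E] [IsBoundedSMul R E] (c : R) (x y : E) :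
    ‖x - y‖ - ‖1 - c‖ * ‖x‖ ≤ ‖c • x - y‖ := by
  have scaling : ‖x - c • x‖ ≤ ‖1 - c‖ * ‖x‖ := by
    simpa only [sub_smul, one_smul] using norm_smul_le (1 - c) x
  linarith [norm_sub_le_norm_sub_add_norm_sub x (c • x) y]

theorem stmt6_general {θ₀ θ lam δ : ℝ} {z : ℂ}
    (hlam : 0 < lam) (hlam_le : lam ≤ |θ₀ - θ|) (hpi : |θ₀ - θ| ≤ Real.pi)
    (hδ : ‖1 - z‖ / lam ≤ δ) :
    (2 / Real.pi - δ) * |θ₀ - θ| ≤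
      ‖z * Complex.exp (θ₀ * Complex.I) - Complex.exp (θ * Complex.I)‖ := by
  have hδ_nonneg : 0 ≤ δ := le_trans (by positivity) hδ
  have radial : ‖1 - z‖ ≤ δ * |θ₀ - θ| :=
    ((div_le_iff₀ hlam).mp hδ).trans (mul_le_mul_of_nonneg_left hlam_le hδ_nonneg)
  calc (2 / Real.pi - δ) * |θ₀ - θ|
      = 2 / Real.pi * |θ₀ - θ| - δ * |θ₀ - θ| := sub_mul _ _ _
    _ ≤ ‖Complex.exp (θ₀ * Complex.I) - Complex.exp (θ * Complex.I)‖ - ‖1 - z‖ :=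
        sub_le_sub (two_div_pi_mul_abs_sub_le_norm_exp_sub_exp hpi) radial
    _ ≤ ‖z * Complex.exp (θ₀ * Complex.I) - Complex.exp (θ * Complex.I)‖ := by
        simpa only [smul_eq_mul, Complex.norm_exp_ofReal_mul_I, mul_one] using
          norm_sub_sub_le_norm_smul_sub z (Complex.exp (θ₀ * Complex.I))
            (Complex.exp (θ * Complex.I))

/-- if `0 < λ < |θ₀ − θ| ≤ π`, `0 < ρ < 1` and `(1−ρ)/λ < δ < 2/π`,
then `|ρ e^{iθ₀} − e^{iθ}| ≥ (2/π − δ) |θ₀ − θ|`. -/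
theorem stmt6 (θ₀ θ lam ρ δ : ℝ)
    (h1 : 0 < lam) (h2 : lam < |θ₀ - θ|) (h3 : |θ₀ - θ| ≤ Real.pi)
    (h4 : 0 < ρ) (h5 : ρ < 1)
    (h6 : (1 - ρ) / lam < δ) (h7 : δ < 2 / Real.pi) :
    (2 / Real.pi - δ) * |θ₀ - θ| ≤
      ‖(ρ : ℂ) * Complex.exp (θ₀ * Complex.I) -
        Complex.exp (θ * Complex.I)‖ := by
  have radial : ‖1 - (ρ : ℂ)‖ = 1 - ρ := mod_cast Complex.norm_of_nonneg (sub_pos.mpr h5).le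
  exact stmt6_general h1 h2.le h3 (radial ▸ h6.le)
end

section
/- Let α ∈ (0,2). There exists a constant c = c(α) > 0 such that for every θ₀ ∈ ℝ, every λ ∈ (0, π), every ρ ∈ (0,1), and every δ with (1−ρ)/λ < δ ≤ 1/π, one has ∫_{{θ ∈ [θ₀−π, θ₀+π] : |θ−θ₀| > λ}} (1−ρ²)^{α/2} |ρe^{iθ₀} − e^{iθ}|^{−2} dθ ≤ c δ (1−ρ)^{α/2−1}. -/
open MeasureTheory

/-!
Replacing `ρ e^{iθ₀}` by its radial projection `e^{iθ₀}` at most doubles the distance to `e^{iθ}`,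
and a chord of the unit circle is at least `2 / π` times its arc; hence
`|θ - θ₀| ≤ π ‖ρ e^{iθ₀} - e^{iθ}‖` whenever `|θ - θ₀| ≤ π`. The kernel is therefore dominated by
`π² |θ - θ₀|⁻²`, whose integral over `|θ - θ₀| > λ` is `2π² / λ ≤ 2π² δ / (1 - ρ)`, and the
prefactor `(1 - ρ²)^{α/2}` is comparable to `(1 - ρ)^{α/2}` because `1 ≤ 1 + ρ ≤ 2`.
-/

lemma norm_sub_le_two_mul_norm_smul_sub {E : Type*} [SeminormedAddCommGroup E] [NormedSpace ℝ E]
    {a b : E} (hab : ‖a‖ = ‖b‖) {ρ : ℝ} (hρ : 0 ≤ ρ) : ‖a - b‖ ≤ 2 * ‖ρ • a - b‖ := by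
  have radial_gap : ‖a - ρ • a‖ ≤ ‖ρ • a - b‖ := by
    calc ‖a - ρ • a‖ = ‖(1 - ρ) • a‖ := by rw [sub_smul, one_smul]
      _ = |‖ρ • a‖ - ‖b‖| := by
          rw [norm_smul, norm_smul, ← hab, Real.norm_of_nonneg hρ, Real.norm_eq_abs,
            ← sub_one_mul, abs_mul, abs_norm, abs_sub_comm]
      _ ≤ ‖ρ • a - b‖ := abs_norm_sub_norm_le _ _
  linarith [norm_sub_le_norm_sub_add_norm_sub a (ρ • a) b]

lemma angle_exp_exp_eq_abs_sub {x y : ℝ} (h : |x - y| ≤ Real.pi) :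
    InnerProductGeometry.angle (Complex.exp (x * Complex.I)) (Complex.exp (y * Complex.I)) =
      |x - y| := by
  wlog hyx : y ≤ x generalizing x y
  · rw [InnerProductGeometry.angle_comm, abs_sub_comm]
    exact this (abs_sub_comm x y ▸ h) (le_of_not_ge hyx)
  have mem_Ioc : x - y ∈ Set.Ioc (-Real.pi) (-Real.pi + 2 * Real.pi) :=
    ⟨by linarith [Real.pi_pos], by linarith [le_abs_self (x - y)]⟩
  rw [Complex.angle_exp_exp, (toIocMod_eq_self Real.two_pi_pos).2 mem_Ioc]

lemma abs_sub_le_pi_mul_norm_mul_exp_sub_exp {ρ θ₀ θ : ℝ} (hρ : 0 ≤ ρ)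
    (h : |θ - θ₀| ≤ Real.pi) :
    |θ - θ₀| ≤
      Real.pi * ‖(ρ : ℂ) * Complex.exp (θ₀ * Complex.I) - Complex.exp (θ * Complex.I)‖ := by
  set u := Complex.exp (θ₀ * Complex.I)
  set v := Complex.exp (θ * Complex.I)
  have hu : ‖u‖ = 1 := Complex.norm_exp_ofReal_mul_I θ₀
  have hv : ‖v‖ = 1 := Complex.norm_exp_ofReal_mul_I θ
  calc |θ - θ₀| = InnerProductGeometry.angle u v := by
        rw [InnerProductGeometry.angle_comm, angle_exp_exp_eq_abs_sub h]
    _ ≤ Real.pi / 2 * ‖u - v‖ := Complex.angle_le_mul_norm_sub hu hv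
    _ ≤ Real.pi / 2 * (2 * ‖ρ • u - v‖) := by
        gcongr
        exact norm_sub_le_two_mul_norm_smul_sub (hu.trans hv.symm) hρ
    _ = Real.pi * ‖(ρ : ℂ) * u - v‖ := by
        rw [Complex.real_smul]
        ring

section PowerTail

variable {a r : ℝ}

lemma measurableSet_lt_abs_sub (r x₀ : ℝ) : MeasurableSet {x : ℝ | r < |x - x₀|} :=
  measurableSet_lt measurable_const (by fun_prop)

lemma setIntegral_lt_abs_sub_rpow (ha : a < -1) (hr : 0 < r) (x₀ : ℝ) :
    ∫ x in {x : ℝ | r < |x - x₀|}, |x - x₀| ^ a = 2 * (-r ^ (a + 1) / (a + 1)) := by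
  calc ∫ x in {x : ℝ | r < |x - x₀|}, |x - x₀| ^ a
      = ∫ x, (Set.Ioi r).indicator (· ^ a) |x - x₀| :=
        (integral_indicator (measurableSet_lt_abs_sub r x₀)).symm
    _ = ∫ x, (Set.Ioi r).indicator (· ^ a) |x| :=
        integral_sub_right_eq_self (fun x ↦ (Set.Ioi r).indicator (· ^ a) |x|) x₀
    _ = 2 * ∫ x in Set.Ioi r, x ^ a := by
        rw [integral_comp_abs, setIntegral_indicator measurableSet_Ioi, Set.Ioi_inter_Ioi,
          sup_eq_right.2 hr.le]
    _ = 2 * (-r ^ (a + 1) / (a + 1)) := by rw [integral_Ioi_rpow_of_lt ha hr]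

lemma integrableOn_lt_abs_sub_rpow (ha : a < -1) (hr : 0 < r) (x₀ : ℝ) :
    IntegrableOn (fun x ↦ |x - x₀| ^ a) {x : ℝ | r < |x - x₀|} := by
  refine Integrable.of_integral_ne_zero ?_
  rw [setIntegral_lt_abs_sub_rpow ha hr]
  have hra : r ^ (a + 1) ≠ 0 := (Real.rpow_pos_of_pos hr _).ne'
  exact mul_ne_zero two_ne_zero (div_ne_zero (neg_ne_zero.2 hra) (by linarith))

end PowerTail

lemma setIntegral_norm_mul_exp_sub_exp_rpow_le {a r ρ : ℝ} (ha : a < -1) (hr : 0 < r)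
    (hρ : 0 ≤ ρ) (θ₀ : ℝ) :
    ∫ θ in {θ : ℝ | θ ∈ Set.Icc (θ₀ - Real.pi) (θ₀ + Real.pi) ∧ r < |θ - θ₀|},
        ‖(ρ : ℂ) * Complex.exp (θ₀ * Complex.I) - Complex.exp (θ * Complex.I)‖ ^ a
      ≤ Real.pi ^ (-a) * (2 * (-r ^ (a + 1) / (a + 1))) := by
  set S := {θ : ℝ | θ ∈ Set.Icc (θ₀ - Real.pi) (θ₀ + Real.pi) ∧ r < |θ - θ₀|}
  have hS : MeasurableSet S := measurableSet_Icc.inter (measurableSet_lt_abs_sub r θ₀)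
  have majorant_integrable :
      IntegrableOn (fun θ ↦ Real.pi ^ (-a) * |θ - θ₀| ^ a) {θ | r < |θ - θ₀|} :=
    (integrableOn_lt_abs_sub_rpow ha hr θ₀).const_mul _
  have subset_tail : S ⊆ {θ | r < |θ - θ₀|} := fun _ hθ ↦ hθ.2
  have kernel_le : ∀ θ ∈ S,
      ‖(ρ : ℂ) * Complex.exp (θ₀ * Complex.I) - Complex.exp (θ * Complex.I)‖ ^ a ≤
        Real.pi ^ (-a) * |θ - θ₀| ^ a := by
    rintro θ ⟨⟨hθ_left, hθ_right⟩, hθ_far⟩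
    have abs_le_pi : |θ - θ₀| ≤ Real.pi := abs_le.2 ⟨by linarith, by linarith⟩
    have abs_pos : 0 < |θ - θ₀| := hr.trans hθ_far
    calc _ ≤ (|θ - θ₀| / Real.pi) ^ a :=
          Real.rpow_le_rpow_of_nonpos (by positivity)
            ((div_le_iff₀' Real.pi_pos).2
              (abs_sub_le_pi_mul_norm_mul_exp_sub_exp hρ abs_le_pi)) (by linarith)
      _ = Real.pi ^ (-a) * |θ - θ₀| ^ a := by
          rw [Real.div_rpow abs_pos.le Real.pi_pos.le, Real.rpow_neg Real.pi_pos.le,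
            div_eq_inv_mul]
  calc _ ≤ ∫ θ in S, Real.pi ^ (-a) * |θ - θ₀| ^ a :=
        integral_mono_of_nonneg (.of_forall fun θ ↦ by positivity)
          (majorant_integrable.mono_set subset_tail) (ae_restrict_of_forall_mem hS kernel_le)
    _ ≤ ∫ θ in {θ | r < |θ - θ₀|}, Real.pi ^ (-a) * |θ - θ₀| ^ a :=
        setIntegral_mono_set majorant_integrable (.of_forall fun θ ↦ by positivity)
          subset_tail.eventuallyLE
    _ = _ := by rw [integral_const_mul, setIntegral_lt_abs_sub_rpow ha hr]

lemma setIntegral_inv_sq_norm_mul_exp_sub_exp_le {r ρ : ℝ} (hr : 0 < r) (hρ : 0 ≤ ρ) (θ₀ : ℝ) :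
    ∫ θ in {θ : ℝ | θ ∈ Set.Icc (θ₀ - Real.pi) (θ₀ + Real.pi) ∧ r < |θ - θ₀|},
        (‖(ρ : ℂ) * Complex.exp (θ₀ * Complex.I) - Complex.exp (θ * Complex.I)‖ ^ 2)⁻¹
      ≤ 2 * Real.pi ^ 2 * r⁻¹ := by
  have rpow_neg_two (x : ℝ) (hx : 0 ≤ x) : x ^ (-2 : ℝ) = (x ^ 2)⁻¹ := by
    rw [Real.rpow_neg hx, Real.rpow_two]
  have bound := setIntegral_norm_mul_exp_sub_exp_rpow_le (a := -2) (by norm_num) hr hρ θ₀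
  simp only [rpow_neg_two _ (norm_nonneg _)] at bound
  calc _ ≤ Real.pi ^ (-(-2) : ℝ) * (2 * (-r ^ (-2 + 1 : ℝ) / (-2 + 1))) := bound
    _ = Real.pi ^ (2 : ℝ) * (2 * r ^ (-1 : ℝ)) := by norm_num
    _ = 2 * Real.pi ^ 2 * r⁻¹ := by
        rw [Real.rpow_two, Real.rpow_neg_one]
        ring

lemma one_sub_sq_rpow_le {ρ : ℝ} (hρ : ρ ∈ Set.Icc (0 : ℝ) 1) (s : ℝ) :
    (1 - ρ ^ 2) ^ s ≤ 2 ^ |s| * (1 - ρ) ^ s := by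
  obtain ⟨hρ₀, hρ₁⟩ := hρ
  have one_add_rpow_le : (1 + ρ) ^ s ≤ 2 ^ |s| := by
    calc (1 + ρ) ^ s ≤ (1 + ρ) ^ |s| :=
          Real.rpow_le_rpow_of_exponent_le (by linarith) (le_abs_self s)
      _ ≤ 2 ^ |s| := Real.rpow_le_rpow (by linarith) (by linarith) (abs_nonneg s)
  calc (1 - ρ ^ 2) ^ s = (1 + ρ) ^ s * (1 - ρ) ^ s := by
        rw [← Real.mul_rpow (by linarith) (by linarith)]
        ring_nf
    _ ≤ 2 ^ |s| * (1 - ρ) ^ s :=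
        mul_le_mul_of_nonneg_right one_add_rpow_le (Real.rpow_nonneg (by linarith) s)

theorem stmt7_general (α : ℝ) :
    ∃ c : ℝ, 0 < c ∧
      ∀ θ₀ lam ρ δ : ℝ, 0 < lam → ρ ∈ Set.Ico (0 : ℝ) 1 → (1 - ρ) / lam ≤ δ →
        (∫ θ in {θ : ℝ | θ ∈ Set.Icc (θ₀ - Real.pi) (θ₀ + Real.pi) ∧ lam < |θ - θ₀|},
            (1 - ρ ^ 2) ^ (α / 2) /
              ‖(ρ : ℂ) * Complex.exp (θ₀ * Complex.I) -
                Complex.exp (θ * Complex.I)‖ ^ 2)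
          ≤ c * δ * (1 - ρ) ^ (α / 2 - 1) := by
  refine ⟨2 ^ |α / 2| * (2 * Real.pi ^ 2), by positivity, ?_⟩
  rintro θ₀ lam ρ δ hlam ⟨hρ₀, hρ₁⟩ hδ
  have one_sub_pos : 0 < 1 - ρ := sub_pos.2 hρ₁
  have weight_le := one_sub_sq_rpow_le ⟨hρ₀, hρ₁.le⟩ (α / 2)
  have kernel_le := setIntegral_inv_sq_norm_mul_exp_sub_exp_le hlam hρ₀ θ₀
  have inv_lam_le : lam⁻¹ ≤ δ / (1 - ρ) := by
    rw [le_div_iff₀ one_sub_pos]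
    rwa [div_eq_inv_mul] at hδ
  simp only [div_eq_mul_inv _ (‖_‖ ^ 2), integral_const_mul]
  calc _ ≤ (2 ^ |α / 2| * (1 - ρ) ^ (α / 2)) * (2 * Real.pi ^ 2 * lam⁻¹) := by gcongr
    _ ≤ (2 ^ |α / 2| * (1 - ρ) ^ (α / 2)) * (2 * Real.pi ^ 2 * (δ / (1 - ρ))) := by gcongr
    _ = _ := by
        rw [Real.rpow_sub_one one_sub_pos.ne']
        ring

/-- there exists `c = c(α) > 0` such that for all `θ₀ ∈ ℝ`,
`λ ∈ (0,π)`, `ρ ∈ (0,1)` and `δ` with `(1−ρ)/λ < δ ≤ 1/π`,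
`∫_{θ ∈ [θ₀−π, θ₀+π], |θ−θ₀| > λ} (1−ρ²)^{α/2} |ρe^{iθ₀} − e^{iθ}|^{−2} dθ
  ≤ c δ (1−ρ)^{α/2−1}`. -/
theorem stmt7 (α : ℝ) (hα : α ∈ Set.Ioo (0 : ℝ) 2) :
    ∃ c : ℝ, 0 < c ∧
      ∀ θ₀ lam ρ δ : ℝ, lam ∈ Set.Ioo 0 Real.pi → ρ ∈ Set.Ioo (0 : ℝ) 1 →
        (1 - ρ) / lam < δ → δ ≤ 1 / Real.pi →
        (∫ θ in {θ : ℝ | θ ∈ Set.Icc (θ₀ - Real.pi) (θ₀ + Real.pi) ∧ lam < |θ - θ₀|},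
            (1 - ρ ^ 2) ^ (α / 2) /
              ‖(ρ : ℂ) * Complex.exp (θ₀ * Complex.I) -
                Complex.exp (θ * Complex.I)‖ ^ 2)
          ≤ c * δ * (1 - ρ) ^ (α / 2 - 1) := by
  obtain ⟨c, c_pos, bound⟩ := stmt7_general α
  exact ⟨c, c_pos, fun θ₀ lam ρ δ hlam hρ hδ _ ↦
    bound θ₀ lam ρ δ hlam.1 (Set.Ioo_subset_Ico_self hρ) hδ.le⟩
end

section
/- Let n ≥ 2 and α ∈ (0,2). There exists a constant c > 0 such that for every x in the open unit ball B of ℝⁿ, ∫_S (1−|x|²)^{α/2} |x−w|^{−n} σ(dw) ≤ c (1−|x|)^{α/2−1}, where S is the unit sphere and σ is the surface measure on S. -/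
open Metric Set MeasureTheory

/-!
Since `1 - ‖x‖ ^ 2` is comparable to `δ = 1 - ‖x‖`, it suffices to bound `∫ |x - w| ^ (-n) σ(dw)` by
a multiple of `δ⁻¹`. The surface measure satisfies `σ(closedBall x r) ≤ C r ^ (n - 1)` for every
`x` and `r`: near a point `v` of the sphere, the orthogonal projection onto the hyperplane `vᗮ` is
bi-Lipschitz, the bound holds for Lebesgue measure on the hyperplane, and finitely many such
neighbourhoods cover the sphere. As the sphere stays at distance `δ` from `x`, it is covered by the
shells `2 ^ k δ ≤ |x - w| ≤ 2 ^ (k + 1) δ`, and the `k`-th shell contributes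
`O((2 ^ k δ) ^ (-n) (2 ^ (k + 1) δ) ^ (n - 1)) = O(2 ^ (-k) δ⁻¹)`, a summable geometric series.
-/

open Module RealInnerProductSpace
open scoped ENNReal NNReal Topology

section UpperRegular

variable {X Y : Type*} [MeasurableSpace X]

lemma hausdorffMeasure_le_mul_image_of_antilipschitzWith_domRestrict [MetricSpace X] [BorelSpace X]
    [MetricSpace Y] [MeasurableSpace Y] [BorelSpace Y] {f : X → Y} {K : ℝ≥0} {s t : Set X}
    (hf : AntilipschitzWith K (s.domRestrict f)) (hts : t ⊆ s) {d : ℝ} (hd : 0 ≤ d) :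
    μH[d] t ≤ (K : ℝ≥0∞) ^ d * μH[d] (f '' t) := by
  have ht : ((↑) : s → X) '' ((↑) ⁻¹' t) = t := by
    rw [Subtype.image_preimage_coe, inter_eq_right.2 hts]
  calc μH[d] t = μH[d] (((↑) : s → X) ⁻¹' t) := by
        rw [← (isometry_subtype_coe (s := s)).hausdorffMeasure_image (.inl hd), ht]
    _ ≤ (K : ℝ≥0∞) ^ d * μH[d] (s.domRestrict f '' ((↑) ⁻¹' t)) := hf.le_hausdorffMeasure_image hd _
    _ = (K : ℝ≥0∞) ^ d * μH[d] (f '' t) := by rw [domRestrict_eq, image_comp, ht]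

/-- Upper Ahlfors regularity of dimension `d`: the mass of a closed ball of radius `r` is
`O(r ^ d)`, uniformly in the centre. The centre ranges over the whole ambient space, so that the
notion applies to a measure carried by a subset and balls centred off that subset. -/
def IsUpperRegular [PseudoMetricSpace X] (μ : Measure X) (d : ℝ) : Prop :=
  ∃ C : ℝ≥0, ∀ (x : X) (r : ℝ≥0), μ (closedBall x r) ≤ C * (r : ℝ≥0∞) ^ d

namespace IsUpperRegular

section PseudoMetric

variable [PseudoMetricSpace X] {μ ν : Measure X} {d : ℝ}

lemma zero : IsUpperRegular (0 : Measure X) d := ⟨0, by simp⟩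

lemma mono (hμ : IsUpperRegular μ d) (hνμ : ν ≤ μ) : IsUpperRegular ν d :=
  let ⟨C, hC⟩ := hμ
  ⟨C, fun x r ↦ (hνμ _).trans (hC x r)⟩

lemma add (hμ : IsUpperRegular μ d) (hν : IsUpperRegular ν d) : IsUpperRegular (μ + ν) d := by
  obtain ⟨C, hC⟩ := hμ
  obtain ⟨D, hD⟩ := hν
  refine ⟨C + D, fun x r ↦ ?_⟩
  rw [Measure.add_apply, ENNReal.coe_add, add_mul]
  exact add_le_add (hC x r) (hD x r)

lemma restrict_of_isCompact {K : Set X} (hK : IsCompact K)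
    (hloc : ∀ x ∈ K, ∃ s ∈ 𝓝[K] x, IsUpperRegular (μ.restrict s) d) :
    IsUpperRegular (μ.restrict K) d :=
  hK.induction_on (by simpa using zero)
    (fun _ _ hst ht ↦ ht.mono (Measure.restrict_mono hst le_rfl))
    (fun s t hs ht ↦ (hs.add ht).mono (Measure.restrict_union_le s t)) hloc

end PseudoMetric

lemma hausdorffMeasure_restrict_of_antilipschitzWith [MetricSpace X] [BorelSpace X]
    [MetricSpace Y] [MeasurableSpace Y] [BorelSpace Y] {f : X → Y} {K L : ℝ≥0} {s : Set X} {d : ℝ}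
    (hd : 0 ≤ d) (hY : IsUpperRegular (μH[d] : Measure Y) d) (hL : LipschitzWith L f)
    (hK : AntilipschitzWith K (s.domRestrict f)) :
    IsUpperRegular ((μH[d] : Measure X).restrict s) d := by
  obtain ⟨C, hC⟩ := hY
  refine ⟨K ^ d * (C * L ^ d), fun x r ↦ ?_⟩
  have himage : f '' (closedBall x r ∩ s) ⊆ closedBall (f x) ↑(L * r) :=
    (image_mono inter_subset_left).trans (hL.mapsTo_closedBall x r).image_subset
  calc (μH[d] : Measure X).restrict s (closedBall x r)
      = μH[d] (closedBall x r ∩ s) := Measure.restrict_apply measurableSet_closedBall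
    _ ≤ (K : ℝ≥0∞) ^ d * μH[d] (f '' (closedBall x r ∩ s)) :=
        hausdorffMeasure_le_mul_image_of_antilipschitzWith_domRestrict hK inter_subset_right hd
    _ ≤ (K : ℝ≥0∞) ^ d * (C * ((L * r : ℝ≥0) : ℝ≥0∞) ^ d) := by
        gcongr
        exact (measure_mono himage).trans (hC _ _)
    _ = ((K ^ d * (C * L ^ d) : ℝ≥0) : ℝ≥0∞) * (r : ℝ≥0∞) ^ d := by
        simp only [ENNReal.coe_mul, ENNReal.coe_rpow_of_nonneg _ hd,
          ENNReal.mul_rpow_of_nonneg _ _ hd, mul_assoc]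

lemma of_isAddHaarMeasure {F : Type*} [NormedAddCommGroup F] [NormedSpace ℝ F]
    [FiniteDimensional ℝ F] [MeasurableSpace F] [BorelSpace F] (μ : Measure F)
    [μ.IsAddHaarMeasure] : IsUpperRegular μ (finrank ℝ F) := by
  refine ⟨(μ (ball 0 1)).toNNReal, fun x r ↦ le_of_eq ?_⟩
  rw [μ.addHaar_closedBall x r.coe_nonneg, ENNReal.coe_toNNReal measure_ball_lt_top.ne, mul_comm,
    ENNReal.rpow_natCast, ENNReal.ofReal_pow r.coe_nonneg, ENNReal.ofReal_coe_nnreal]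

end IsUpperRegular

end UpperRegular

section RieszPotential

variable {X : Type*} [PseudoMetricSpace X]

lemma setOf_le_nndist_subset_iUnion_closedBall_diff_ball (x : X) {δ : ℝ≥0} (hδ : 0 < δ) :
    {w | δ ≤ nndist x w} ⊆
      ⋃ k : ℕ, closedBall x ↑(2 ^ (k + 1) * δ) \ ball x ↑(2 ^ k * δ) := by
  intro w hw
  obtain ⟨k, hlower, hupper⟩ := exists_nat_pow_near ((one_le_div hδ).2 hw) one_lt_two
  rw [le_div_iff₀ hδ] at hlower
  rw [div_lt_iff₀ hδ] at hupper
  refine mem_iUnion.2 ⟨k, ?_, ?_⟩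
  · rw [mem_closedBall']
    exact_mod_cast hupper.le
  · rw [mem_ball', not_lt]
    exact_mod_cast hlower

variable [MeasurableSpace X] [OpensMeasurableSpace X] {μ : Measure X} {d p : ℝ}

lemma setLIntegral_edist_rpow_neg_closedBall_diff_ball_le (hp : 0 ≤ p) (x : X) (r R : ℝ≥0) :
    ∫⁻ w in closedBall x R \ ball x r, edist x w ^ (-p) ∂μ
      ≤ (r : ℝ≥0∞) ^ (-p) * μ (closedBall x R) :=
  calc ∫⁻ w in closedBall x R \ ball x r, edist x w ^ (-p) ∂μ
      ≤ ∫⁻ _ in closedBall x R \ ball x r, (r : ℝ≥0∞) ^ (-p) ∂μ := by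
        refine setLIntegral_mono' (measurableSet_closedBall.diff measurableSet_ball) ?_
        rintro w ⟨-, hw⟩
        have hrw : (r : ℝ≥0∞) ≤ edist x w := by
          rw [mem_ball', not_lt] at hw
          rw [edist_nndist]
          exact_mod_cast hw
        simpa only [ENNReal.rpow_neg, ENNReal.inv_le_inv] using ENNReal.rpow_le_rpow hrw hp
    _ ≤ (r : ℝ≥0∞) ^ (-p) * μ (closedBall x R) := by
        rw [setLIntegral_const]
        gcongr
        exact sdiff_subset

lemma dyadic_rpow_neg_mul_rpow (d p : ℝ) {δ : ℝ≥0} (hδ : δ ≠ 0) (k : ℕ) :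
    (2 ^ k * δ) ^ (-p) * (2 ^ (k + 1) * δ) ^ d = 2 ^ d * δ ^ (d - p) * (2 ^ (d - p)) ^ k := by
  have hpow : ((2 : ℝ≥0) ^ (d - p)) ^ k = (2 ^ k) ^ (d - p) := by
    rw [← NNReal.rpow_mul_natCast, mul_comm, NNReal.rpow_natCast_mul]
  rw [hpow, pow_succ', mul_assoc 2, NNReal.mul_rpow (x := 2), mul_left_comm,
    ← NNReal.rpow_add (by positivity), neg_add_eq_sub, NNReal.mul_rpow]
  ring

theorem IsUpperRegular.exists_setLIntegral_edist_rpow_neg_le (hμ : IsUpperRegular μ d)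
    (hp : 0 ≤ p) (hdp : d < p) :
    ∃ C : ℝ≥0, ∀ (x : X) (δ : ℝ≥0), 0 < δ →
      ∫⁻ w in {w | δ ≤ nndist x w}, edist x w ^ (-p) ∂μ ≤ (C * δ ^ (d - p) : ℝ≥0) := by
  obtain ⟨C, hC⟩ := hμ
  have hratio : (2 : ℝ≥0) ^ (d - p) < 1 :=
    NNReal.rpow_lt_one_of_one_lt_of_neg one_lt_two (sub_neg.2 hdp)
  refine ⟨C * 2 ^ d * (1 - 2 ^ (d - p))⁻¹, fun x δ hδ ↦ ?_⟩
  have hshell (k : ℕ) : ∫⁻ w in closedBall x ↑(2 ^ (k + 1) * δ) \ ball x ↑(2 ^ k * δ),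
      edist x w ^ (-p) ∂μ ≤ (C * 2 ^ d * δ ^ (d - p) * (2 ^ (d - p)) ^ k : ℝ≥0) := by
    refine (setLIntegral_edist_rpow_neg_closedBall_diff_ball_le hp _ _ _).trans ?_
    refine (mul_le_mul_right (hC x (2 ^ (k + 1) * δ)) _).trans_eq ?_
    rw [← ENNReal.coe_rpow_of_ne_zero (by positivity),
      ← ENNReal.coe_rpow_of_ne_zero (by positivity), ← ENNReal.coe_mul, ← ENNReal.coe_mul,
      mul_left_comm, dyadic_rpow_neg_mul_rpow d p hδ.ne']
    congr 1
    ring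
  calc ∫⁻ w in {w | δ ≤ nndist x w}, edist x w ^ (-p) ∂μ
      ≤ ∑' k : ℕ, ∫⁻ w in closedBall x ↑(2 ^ (k + 1) * δ) \ ball x ↑(2 ^ k * δ),
          edist x w ^ (-p) ∂μ :=
        (lintegral_mono_set (setOf_le_nndist_subset_iUnion_closedBall_diff_ball x hδ)).trans
          (lintegral_iUnion_le _ _)
    _ ≤ ∑' k : ℕ, ((C * 2 ^ d * δ ^ (d - p) * (2 ^ (d - p)) ^ k : ℝ≥0) : ℝ≥0∞) :=
        ENNReal.tsum_le_tsum hshell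
    _ = (C * 2 ^ d * (1 - 2 ^ (d - p))⁻¹ * δ ^ (d - p) : ℝ≥0) := by
        rw [← ENNReal.coe_tsum ((NNReal.summable_geometric hratio).mul_left _),
          NNReal.tsum_mul_left, NNReal.tsum_geometric hratio, mul_right_comm]

end RieszPotential

section Sphere

variable {E : Type*} [NormedAddCommGroup E] [InnerProductSpace ℝ E]

lemma norm_sq_eq_inner_sq_add_norm_sq_orthogonalProjectionOnto {v : E} (hv : ‖v‖ = 1) (w : E) :
    ‖w‖ ^ 2 = ⟪v, w⟫ ^ 2 + ‖(ℝ ∙ v)ᗮ.orthogonalProjectionOnto w‖ ^ 2 := by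
  have h := Submodule.norm_sq_eq_add_norm_sq_projection w (ℝ ∙ v)
  have hcoe : ‖(ℝ ∙ v).orthogonalProjectionOnto w‖ = |⟪v, w⟫| := by
    rw [← Submodule.norm_coe, Submodule.coe_orthogonalProjectionOnto_apply,
      Submodule.starProjection_unit_singleton ℝ hv, norm_smul, hv, mul_one, Real.norm_eq_abs]
  rwa [hcoe, sq_abs] at h

lemma norm_le_abs_inner_add_norm_orthogonalProjectionOnto {v : E} (hv : ‖v‖ = 1) (w : E) :
    ‖w‖ ≤ |⟪v, w⟫| + ‖(ℝ ∙ v)ᗮ.orthogonalProjectionOnto w‖ := by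
  refine le_of_sq_le_sq ?_ (by positivity)
  rw [norm_sq_eq_inner_sq_add_norm_sq_orthogonalProjectionOnto hv w, ← sq_abs ⟪v, w⟫]
  nlinarith [mul_nonneg (abs_nonneg ⟪v, w⟫)
    (norm_nonneg ((ℝ ∙ v)ᗮ.orthogonalProjectionOnto w))]

-- With `P` the projection, `⟪v, ·⟫² = 1 - ‖P ·‖²` on the sphere, and `⟪v, w⟫² - ⟪v, u⟫²` has the
-- factor `⟪v, w⟫ + ⟪v, u⟫ ≥ 2c`.
lemma mul_abs_inner_sub_le_norm_orthogonalProjectionOnto_sub {v w u : E} (hv : ‖v‖ = 1)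
    (hw : ‖w‖ = 1) (hu : ‖u‖ = 1) {c : ℝ} (hcw : c ≤ ⟪v, w⟫) (hcu : c ≤ ⟪v, u⟫) :
    c * |⟪v, w - u⟫| ≤ ‖(ℝ ∙ v)ᗮ.orthogonalProjectionOnto (w - u)‖ := by
  set P := (ℝ ∙ v)ᗮ.orthogonalProjectionOnto
  have hPw : ‖P w‖ ≤ 1 := hw ▸ Submodule.norm_orthogonalProjectionOnto_apply_le _ w
  have hPu : ‖P u‖ ≤ 1 := hu ▸ Submodule.norm_orthogonalProjectionOnto_apply_le _ u
  have hdiff : (⟪v, w⟫ + ⟪v, u⟫) * ⟪v, w - u⟫ = (‖P u‖ + ‖P w‖) * (‖P u‖ - ‖P w‖) := by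
    have hw_sq := norm_sq_eq_inner_sq_add_norm_sq_orthogonalProjectionOnto hv w
    have hu_sq := norm_sq_eq_inner_sq_add_norm_sq_orthogonalProjectionOnto hv u
    rw [hw] at hw_sq
    rw [hu] at hu_sq
    rw [inner_sub_right]
    linear_combination hu_sq - hw_sq
  have hdouble : 2 * (c * |⟪v, w - u⟫|) ≤ 2 * ‖P (w - u)‖ :=
    calc 2 * (c * |⟪v, w - u⟫|) = (c + c) * |⟪v, w - u⟫| := by ring
      _ ≤ |⟪v, w⟫ + ⟪v, u⟫| * |⟪v, w - u⟫| := by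
          gcongr
          exact (add_le_add hcw hcu).trans (le_abs_self _)
      _ = (‖P u‖ + ‖P w‖) * |‖P u‖ - ‖P w‖| := by
          rw [← abs_mul, hdiff, abs_mul, abs_of_nonneg (by positivity : 0 ≤ ‖P u‖ + ‖P w‖)]
      _ ≤ (1 + 1) * ‖P (w - u)‖ := by
          gcongr
          rw [map_sub, norm_sub_rev]
          exact abs_norm_sub_norm_le _ _
      _ = 2 * ‖P (w - u)‖ := by ring
  linarith

lemma antilipschitzWith_orthogonalProjectionOnto_domRestrict_cap {v : E} (hv : ‖v‖ = 1) {c : ℝ≥0}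
    (hc : 0 < c) :
    AntilipschitzWith (c⁻¹ + 1) ((sphere (0 : E) 1 ∩ {w | c ≤ ⟪v, w⟫}).domRestrict
      (ℝ ∙ v)ᗮ.orthogonalProjectionOnto) := by
  refine .of_le_mul_dist ?_
  rintro ⟨w, hw, hcw⟩ ⟨u, hu, hcu⟩
  rw [mem_sphere_zero_iff_norm] at hw hu
  have hheight : |⟪v, w - u⟫| ≤ (c : ℝ)⁻¹ * ‖(ℝ ∙ v)ᗮ.orthogonalProjectionOnto (w - u)‖ :=
    (le_inv_mul_iff₀ (by exact_mod_cast hc)).2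
      (mul_abs_inner_sub_le_norm_orthogonalProjectionOnto_sub hv hw hu hcw hcu)
  rw [domRestrict_apply, domRestrict_apply, Subtype.dist_eq, dist_eq_norm, dist_eq_norm,
    ← map_sub, NNReal.coe_add, NNReal.coe_inv, NNReal.coe_one, add_mul, one_mul]
  linarith [norm_le_abs_inner_add_norm_orthogonalProjectionOnto hv (w - u)]

lemma finrank_orthogonal_span_singleton_eq_sub_one [FiniteDimensional ℝ E] {v : E} (hv : v ≠ 0) :
    (finrank ℝ (ℝ ∙ v)ᗮ : ℝ) = finrank ℝ E - 1 := by
  have h := (ℝ ∙ v).finrank_add_finrank_orthogonal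
  rw [finrank_span_singleton hv] at h
  rw [← h]
  push_cast
  ring

lemma sphere_subset_setOf_le_nndist {F : Type*} [SeminormedAddCommGroup F] {x : F} {R : ℝ} {δ : ℝ≥0}
    (hδ : δ ≤ R - ‖x‖) : sphere (0 : F) R ⊆ {w | δ ≤ nndist x w} := by
  intro w hw
  rw [mem_sphere_zero_iff_norm] at hw
  have hdist : (δ : ℝ) ≤ dist x w := by
    rw [dist_comm, dist_eq_norm]
    linarith [norm_sub_norm_le w x]
  exact_mod_cast hdist

variable [FiniteDimensional ℝ E] [MeasurableSpace E] [BorelSpace E]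

lemma isUpperRegular_hausdorffMeasure_restrict_sphere :
    IsUpperRegular ((μH[finrank ℝ E - 1] : Measure E).restrict (sphere 0 1)) (finrank ℝ E - 1) := by
  refine .restrict_of_isCompact (isCompact_sphere 0 1) fun v hv ↦ ?_
  rw [mem_sphere_zero_iff_norm] at hv
  refine ⟨sphere 0 1 ∩ {w | ((1 / 2 : ℝ≥0) : ℝ) ≤ ⟪v, w⟫}, inter_mem_nhdsWithin _ ?_, ?_⟩
  · have hcont : ContinuousAt (fun w ↦ ⟪v, w⟫) v := by fun_prop
    have hvv : ((1 / 2 : ℝ≥0) : ℝ) < ⟪v, v⟫ := by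
      rw [real_inner_self_eq_norm_sq, hv]
      norm_num
    exact hcont.eventually_const_le hvv
  · have hv0 : v ≠ 0 := norm_ne_zero_iff.1 (hv.trans_ne one_ne_zero)
    rw [← finrank_orthogonal_span_singleton_eq_sub_one hv0]
    exact .hausdorffMeasure_restrict_of_antilipschitzWith (Nat.cast_nonneg _)
      (.of_isAddHaarMeasure _) (Submodule.lipschitzWith_orthogonalProjectionOnto _)
      (antilipschitzWith_orthogonalProjectionOnto_domRestrict_cap hv (by positivity))

theorem exists_lintegral_sphere_edist_rpow_neg_le {p : ℝ} (hp0 : 0 ≤ p)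
    (hp : (finrank ℝ E : ℝ) - 1 < p) :
    ∃ C : ℝ≥0, ∀ (x : E) (δ : ℝ≥0), 0 < δ → δ ≤ 1 - ‖x‖ →
      ∫⁻ w in sphere (0 : E) 1, edist x w ^ (-p) ∂μH[finrank ℝ E - 1]
        ≤ (C * δ ^ (finrank ℝ E - 1 - p) : ℝ≥0) := by
  obtain ⟨C, hC⟩ := (isUpperRegular_hausdorffMeasure_restrict_sphere
    (E := E)).exists_setLIntegral_edist_rpow_neg_le hp0 hp
  refine ⟨C, fun x δ hδ hδx ↦ ?_⟩
  have hmeas : MeasurableSet {w : E | δ ≤ nndist x w} :=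
    measurableSet_le measurable_const (by fun_prop)
  simpa only [Measure.restrict_restrict hmeas,
    inter_eq_right.2 (sphere_subset_setOf_le_nndist hδx)] using hC x δ hδ

theorem exists_integral_sphere_dist_rpow_neg_le {p : ℝ} (hp0 : 0 ≤ p)
    (hp : (finrank ℝ E : ℝ) - 1 < p) :
    ∃ C : ℝ≥0, ∀ x ∈ ball (0 : E) 1,
      ∫ w in sphere (0 : E) 1, dist x w ^ (-p) ∂μH[finrank ℝ E - 1]
        ≤ C * (1 - ‖x‖) ^ (finrank ℝ E - 1 - p) := by
  obtain ⟨C, hC⟩ := exists_lintegral_sphere_edist_rpow_neg_le (E := E) hp0 hp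
  refine ⟨C, fun x hx ↦ ?_⟩
  have hx1 : 0 < 1 - ‖x‖ := sub_pos.2 (mem_ball_zero_iff.1 hx)
  obtain ⟨δ, hδ⟩ : ∃ δ : ℝ≥0, (δ : ℝ) = 1 - ‖x‖ := ⟨⟨_, hx1.le⟩, rfl⟩
  have hδ0 : 0 < δ := by exact_mod_cast hδ ▸ hx1
  have henorm : ∀ w ∈ sphere (0 : E) 1, ‖dist x w ^ (-p)‖ₑ = edist x w ^ (-p) := fun w hw ↦ by
    have hdist : 0 < dist x w := by
      exact_mod_cast hδ0.trans_le (sphere_subset_setOf_le_nndist hδ.le hw)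
    rw [Real.enorm_eq_ofReal (by positivity), ← ENNReal.ofReal_rpow_of_pos hdist, edist_dist]
  have hbound : ‖∫ w in sphere (0 : E) 1, dist x w ^ (-p) ∂μH[finrank ℝ E - 1]‖ₑ
      ≤ (C * δ ^ (finrank ℝ E - 1 - p) : ℝ≥0) :=
    (enorm_integral_le_lintegral_enorm _).trans <|
      (setLIntegral_congr_fun isClosed_sphere.measurableSet henorm).trans_le (hC x δ hδ0 hδ.le)
  rw [← hδ]
  exact (Real.le_norm_self _).trans (by exact_mod_cast enorm_le_coe.1 hbound)

end Sphere

lemma one_sub_sq_rpow_le_s8 {r : ℝ} (h0 : 0 ≤ r) (h1 : r ≤ 1) (s : ℝ) :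
    (1 - r ^ 2) ^ s ≤ 2 ^ |s| * (1 - r) ^ s :=
  calc (1 - r ^ 2) ^ s = (1 + r) ^ s * (1 - r) ^ s := by
        rw [← Real.mul_rpow (by linarith) (by linarith)]
        ring_nf
    _ ≤ 2 ^ |s| * (1 - r) ^ s := by
        refine mul_le_mul_of_nonneg_right ?_ (Real.rpow_nonneg (by linarith) s)
        calc (1 + r) ^ s ≤ (1 + r) ^ |s| :=
              Real.rpow_le_rpow_of_exponent_le (by linarith) (le_abs_self s)
          _ ≤ 2 ^ |s| := Real.rpow_le_rpow (by linarith) (by linarith) (abs_nonneg s)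

theorem stmt8_general (E : Type*) [NormedAddCommGroup E] [InnerProductSpace ℝ E]
    [FiniteDimensional ℝ E] [MeasurableSpace E] [BorelSpace E] (α : ℝ) :
    ∃ c : ℝ, 0 < c ∧
      ∀ x ∈ ball (0 : E) 1,
        (∫ w in sphere (0 : E) 1,
            (1 - ‖x‖ ^ 2) ^ (α / 2) * dist x w ^ (-(finrank ℝ E : ℝ)) ∂μH[(finrank ℝ E : ℝ) - 1])
          ≤ c * (1 - ‖x‖) ^ (α / 2 - 1) := by
  obtain ⟨C, hC⟩ := exists_integral_sphere_dist_rpow_neg_le (E := E) (Nat.cast_nonneg _)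
    (sub_one_lt (finrank ℝ E : ℝ))
  refine ⟨2 ^ |α / 2| * (C + 1), by positivity, fun x hx ↦ ?_⟩
  have hδ : 0 < 1 - ‖x‖ := sub_pos.2 (mem_ball_zero_iff.1 hx)
  rw [integral_const_mul]
  calc (1 - ‖x‖ ^ 2) ^ (α / 2)
        * ∫ w in sphere (0 : E) 1, dist x w ^ (-(finrank ℝ E : ℝ)) ∂μH[finrank ℝ E - 1]
      ≤ (2 ^ |α / 2| * (1 - ‖x‖) ^ (α / 2)) * ((C + 1) * (1 - ‖x‖) ^ (-1 : ℝ)) := by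
        gcongr
        · exact one_sub_sq_rpow_le_s8 (norm_nonneg x) (by linarith) _
        · refine (hC x hx).trans ?_
          rw [sub_sub_cancel_left]
          gcongr
          linarith
    _ = 2 ^ |α / 2| * (C + 1) * (1 - ‖x‖) ^ (α / 2 - 1) := by
        rw [sub_eq_add_neg (α / 2), Real.rpow_add hδ]
        ring

/-- there exists `c > 0` such that for every `x` in the open unit ball
`B ⊆ ℝⁿ`, `∫_S (1−|x|²)^{α/2} |x−w|^{−n} σ(dw) ≤ c (1−|x|)^{α/2−1}`, where `σ` is the
(n−1)-dimensional surface (Hausdorff) measure on the unit sphere `S`. -/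
theorem stmt8 (n : ℕ) (hn : 2 ≤ n) (α : ℝ) (hα : α ∈ Set.Ioo (0 : ℝ) 2) :
    ∃ c : ℝ, 0 < c ∧
      ∀ x ∈ ball (0 : EuclideanSpace ℝ (Fin n)) 1,
        (∫ w in sphere (0 : EuclideanSpace ℝ (Fin n)) 1,
            (1 - ‖x‖ ^ 2) ^ (α / 2) * dist x w ^ (-(n : ℝ)) ∂μH[(n : ℝ) - 1])
          ≤ c * (1 - ‖x‖) ^ (α / 2 - 1) := by
  simpa only [finrank_euclideanSpace_fin] using stmt8_general (EuclideanSpace ℝ (Fin n)) α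
end

section
/- Let n ≥ 2 and α ∈ (0,2). There exists a constant c > 0 such that for every x in the open unit ball B of ℝⁿ, ∫_S (1−|x|²)^{α/2} |x−w|^{−n} σ(dw) ≥ c (1−|x|)^{α/2−1}, where S is the unit sphere and σ is the surface measure on S. -/
open Metric Set MeasureTheory

/-!
Put `r = 1 - ‖x‖` and let `e` be a point of the sphere nearest to `x`. On the spherical cap of
radius `r` around `e` the distance to `x` lies between `r` and `2 * r`, so the kernel is at least a
constant times `r ^ (α / 2 - n)`. The orthogonal projection onto the hyperplane `eᗮ` does not
increase Hausdorff measure and maps the cap onto a set containing a ball of radius `r / 2`, so the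
cap has measure at least a constant times `r ^ (n - 1)`. The kernel is integrable because the sphere
is compact and, through stereographic projection, locally a Lipschitz image of a compact subset of
a hyperplane, hence of finite measure.
-/

open Module

section CompactSphere

variable {E F : Type*} [NormedAddCommGroup E] [MeasurableSpace E] [BorelSpace E]

lemma hausdorffMeasure_image_lt_top_of_contDiff [NormedSpace ℝ E]
    [NormedAddCommGroup F] [NormedSpace ℝ F] [FiniteDimensional ℝ F] [MeasurableSpace F]
    [BorelSpace F] {f : F → E} (hf : ContDiff ℝ 1 f) {K : Set F} (hK : IsCompact K) :
    μH[finrank ℝ F] (f '' K) < ⊤ := by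
  obtain ⟨C, hC⟩ := hf.locallyLipschitz.locallyLipschitzOn.exists_lipschitzOnWith_of_compact hK
  calc μH[finrank ℝ F] (f '' K) ≤ C ^ (finrank ℝ F : ℝ) * μH[finrank ℝ F] K :=
        hC.hausdorffMeasure_image_le (Nat.cast_nonneg _)
    _ < ⊤ := ENNReal.mul_lt_top
        (ENNReal.rpow_lt_top_of_nonneg (Nat.cast_nonneg _) ENNReal.coe_ne_top) hK.measure_lt_top

variable [InnerProductSpace ℝ E] {m : ℕ} [Fact (finrank ℝ E = m + 1)]

lemma hausdorffMeasure_lt_top_of_isCompact_of_subset_sphere {v : E} (hv : ‖v‖ = 1) {K : Set E}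
    (hK : IsCompact K) (hKS : K ⊆ sphere 0 1) (hvK : v ∉ K) : μH[m] K < ⊤ := by
  have : FiniteDimensional ℝ E := .of_fact_finrank_eq_succ m
  have hv0 : v ≠ 0 := norm_ne_zero_iff.1 (hv ▸ one_ne_zero)
  have hne : ∀ w ∈ K, w ≠ v := fun w hw hwv => hvK (hwv ▸ hw)
  have hproj : IsCompact (stereoToFun v '' K) :=
    hK.image_of_continuousOn <| continuousOn_stereoToFun.mono fun w hw h =>
      hne w hw ((inner_eq_one_iff_of_norm_eq_one hv (mem_sphere_zero_iff_norm.1 (hKS hw))).1 h).symm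
  have hcover : K ⊆ (fun y : (ℝ ∙ v)ᗮ => stereoInvFunAux v y) '' (stereoToFun v '' K) :=
    fun w hw => ⟨_, mem_image_of_mem _ hw,
      congrArg Subtype.val (stereo_left_inv hv (x := ⟨w, hKS hw⟩) (hne w hw))⟩
  have hsmooth : ContDiff ℝ 1 fun y : (ℝ ∙ v)ᗮ => stereoInvFunAux v y :=
    contDiff_stereoInvFunAux.comp (ℝ ∙ v)ᗮ.subtypeL.contDiff
  have himage := hausdorffMeasure_image_lt_top_of_contDiff hsmooth hproj
  rw [Submodule.finrank_orthogonal_span_singleton (n := m) hv0] at himage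
  exact (measure_mono hcover).trans_lt himage

lemma hausdorffMeasure_sphere_lt_top : μH[m] (sphere (0 : E) 1) < ⊤ := by
  have : FiniteDimensional ℝ E := .of_fact_finrank_eq_succ m
  refine (isCompact_sphere (0 : E) 1).measure_lt_top_of_nhdsWithin fun w hw => ?_
  have hw1 : ‖w‖ = 1 := mem_sphere_zero_iff_norm.1 hw
  have hantipode : -w ∉ sphere 0 1 ∩ closedBall w 1 := fun h => by
    have := mem_closedBall.1 h.2
    rw [dist_eq_norm, ← neg_add', norm_neg, ← two_smul ℝ w, norm_smul, hw1] at this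
    norm_num at this
  exact ⟨sphere 0 1 ∩ closedBall w 1,
    inter_mem_nhdsWithin _ (closedBall_mem_nhds w one_pos),
    hausdorffMeasure_lt_top_of_isCompact_of_subset_sphere (v := -w) (by rwa [norm_neg])
      ((isCompact_sphere 0 1).inter_right isClosed_closedBall) inter_subset_left hantipode⟩

end CompactSphere

section Cap

variable {E : Type*} [NormedAddCommGroup E] [InnerProductSpace ℝ E]

lemma ball_subset_orthogonalProjectionOnto_image_cap {e : E} (he : ‖e‖ = 1) {r : ℝ} (hr : r ≤ 2) :
    ball 0 (r / 2) ⊆ (ℝ ∙ e)ᗮ.orthogonalProjectionOnto '' (sphere 0 1 ∩ closedBall e r) := by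
  intro z hz
  have hzr : ‖(z : E)‖ < r / 2 := mem_ball_zero_iff.1 hz
  have hz0 : 0 ≤ ‖(z : E)‖ := norm_nonneg _
  have hze : inner ℝ (z : E) e = 0 := Submodule.mem_orthogonal_singleton_iff_inner_left.1 z.2
  have pythagoras (a : ℝ) : ‖(z : E) + a • e‖ ^ 2 = ‖(z : E)‖ ^ 2 + a ^ 2 := by
    simp [norm_add_sq_real, inner_smul_right, hze, norm_smul, he]
  have hz1 : 0 ≤ 1 - ‖(z : E)‖ ^ 2 := by nlinarith
  set s := √(1 - ‖(z : E)‖ ^ 2)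
  have hs : s ^ 2 = 1 - ‖(z : E)‖ ^ 2 := Real.sq_sqrt hz1
  have hs0 : 0 ≤ s := Real.sqrt_nonneg _
  have hs1 : s ≤ 1 := by nlinarith
  refine ⟨z + s • e, ⟨?_, ?_⟩, ?_⟩
  · rw [mem_sphere_zero_iff_norm, ← pow_eq_one_iff_of_nonneg (norm_nonneg _) two_ne_zero,
      pythagoras, hs]
    ring
  · have hsub : (z : E) + s • e - e = z + (s - 1) • e := by module
    rw [mem_closedBall, dist_eq_norm, hsub]
    refine abs_le_of_sq_le_sq' ?_ (by linarith) |>.2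
    rw [pythagoras]
    nlinarith [mul_nonneg hs0 (sub_nonneg.2 hs1)]
  · rw [map_add, map_smul,
      Submodule.orthogonalProjectionOnto_orthogonalComplement_singleton_eq_zero,
      Submodule.orthogonalProjectionOnto_mem_subspace_eq_self, smul_zero, add_zero]

variable [MeasurableSpace E] [BorelSpace E] {m : ℕ}

lemma hausdorffMeasure_ball_zero_of_finrank_eq [FiniteDimensional ℝ E] (hE : finrank ℝ E = m)
    {r : ℝ} (hr : 0 < r) :
    μH[m] (ball (0 : E) r) =
      ENNReal.ofReal (r ^ m) * μH[m] (ball (0 : EuclideanSpace ℝ (Fin m)) 1) := by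
  let U : E ≃ₗᵢ[ℝ] EuclideanSpace ℝ (Fin m) :=
    ((stdOrthonormalBasis ℝ E).reindex (finCongr hE)).repr
  rw [← U.isometry.hausdorffMeasure_image (.inr U.surjective), U.image_ball, map_zero,
    Measure.addHaar_ball_of_pos _ _ hr, finrank_euclideanSpace_fin]

lemma ofReal_mul_hausdorffMeasure_ball_le_hausdorffMeasure_cap [Fact (finrank ℝ E = m + 1)]
    {e : E} (he : ‖e‖ = 1) {r : ℝ} (hr : 0 < r) (hr2 : r ≤ 2) :
    ENNReal.ofReal ((r / 2) ^ m) * μH[m] (ball (0 : EuclideanSpace ℝ (Fin m)) 1) ≤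
      μH[m] (sphere 0 1 ∩ closedBall e r) := by
  have : FiniteDimensional ℝ E := .of_fact_finrank_eq_succ m
  have he0 : e ≠ 0 := norm_ne_zero_iff.1 (he ▸ one_ne_zero)
  let P := (ℝ ∙ e)ᗮ.orthogonalProjectionOnto
  calc ENNReal.ofReal ((r / 2) ^ m) * μH[m] (ball (0 : EuclideanSpace ℝ (Fin m)) 1)
      = μH[m] (ball (0 : (ℝ ∙ e)ᗮ) (r / 2)) :=
        (hausdorffMeasure_ball_zero_of_finrank_eq
          (Submodule.finrank_orthogonal_span_singleton he0) (half_pos hr)).symm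
    _ ≤ μH[m] (P '' (sphere 0 1 ∩ closedBall e r)) :=
        measure_mono (ball_subset_orthogonalProjectionOnto_image_cap he hr2)
    _ ≤ μH[m] (sphere 0 1 ∩ closedBall e r) := by
        simpa using (ℝ ∙ e)ᗮ.lipschitzWith_orthogonalProjectionOnto.hausdorffMeasure_image_le
          (Nat.cast_nonneg m) (sphere 0 1 ∩ closedBall e r)

lemma exists_mul_pow_le_hausdorffMeasure_real_cap [Fact (finrank ℝ E = m + 1)] :
    ∃ c > 0, ∀ e : E, ‖e‖ = 1 → ∀ r ∈ Ioc (0 : ℝ) 2,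
      c * r ^ m ≤ μH[m].real (sphere 0 1 ∩ closedBall e r) := by
  have hball : 0 < μH[m].real (ball (0 : EuclideanSpace ℝ (Fin m)) 1) :=
    ENNReal.toReal_pos (measure_ball_pos _ _ one_pos).ne' measure_ball_lt_top.ne
  refine ⟨μH[m].real (ball (0 : EuclideanSpace ℝ (Fin m)) 1) / 2 ^ m, by positivity,
    fun e he r hr => ?_⟩
  have hr0 : 0 < r := hr.1
  have hfinite := (measure_mono (inter_subset_left (t := closedBall e r))).trans_lt
    (hausdorffMeasure_sphere_lt_top (E := E) (m := m))
  have hcap := ENNReal.toReal_mono hfinite.ne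
    (ofReal_mul_hausdorffMeasure_ball_le_hausdorffMeasure_cap he hr0 hr.2)
  rw [ENNReal.toReal_mul, ENNReal.toReal_ofReal (by positivity), div_pow] at hcap
  calc _ = r ^ m / 2 ^ m * μH[m].real (ball (0 : EuclideanSpace ℝ (Fin m)) 1) := by ring
    _ ≤ _ := hcap

end Cap

section Distance

variable {E : Type*} [NormedAddCommGroup E]

lemma one_sub_norm_le_dist_of_mem_sphere (x : E) {w : E} (hw : w ∈ sphere (0 : E) 1) :
    1 - ‖x‖ ≤ dist x w := by
  rw [dist_eq_norm', ← mem_sphere_zero_iff_norm.1 hw]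
  exact norm_sub_norm_le w x

lemma exists_norm_eq_one_and_dist_eq_one_sub_norm [NormedSpace ℝ E] [Nontrivial E] {x : E}
    (hx : ‖x‖ ≤ 1) : ∃ e : E, ‖e‖ = 1 ∧ dist x e = 1 - ‖x‖ := by
  obtain ⟨e, he, hxe⟩ : ∃ e : E, ‖e‖ = 1 ∧ ‖x‖ • e = x := by
    rcases eq_or_ne x 0 with rfl | hx0
    · obtain ⟨e, he⟩ := exists_norm_eq E zero_le_one
      exact ⟨e, he, by simp⟩
    · exact ⟨NormedSpace.normalize x, NormedSpace.norm_normalize_eq_one_iff.2 hx0,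
        NormedSpace.norm_smul_normalize x⟩
  refine ⟨e, he, ?_⟩
  calc dist x e = ‖(1 - ‖x‖) • e‖ := by rw [dist_eq_norm', sub_smul, one_smul, hxe]
    _ = 1 - ‖x‖ := by rw [norm_smul, he, mul_one, Real.norm_of_nonneg (sub_nonneg.2 hx)]

end Distance

lemma min_one_rpow_mul_rpow_le_rpow {r d K : ℝ} (hr : 0 < r) (hrd : r ≤ d) (hdK : d ≤ K * r)
    (p : ℝ) : min 1 (K ^ p) * r ^ p ≤ d ^ p := by
  have hK : 0 ≤ K := le_of_mul_le_mul_right (by linarith) hr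
  rcases le_total 0 p with hp | hp
  · calc min 1 (K ^ p) * r ^ p ≤ 1 * r ^ p := by gcongr; exact min_le_left _ _
      _ ≤ d ^ p := by rw [one_mul]; gcongr
  · calc min 1 (K ^ p) * r ^ p ≤ K ^ p * r ^ p := by gcongr; exact min_le_right _ _
      _ = (K * r) ^ p := (Real.mul_rpow hK hr.le).symm
      _ ≤ d ^ p := Real.rpow_le_rpow_of_nonpos (hr.trans_le hrd) hdK hp

section Integral

variable {E : Type*} [NormedAddCommGroup E] [InnerProductSpace ℝ E] [MeasurableSpace E]
  [BorelSpace E] {m : ℕ} [Fact (finrank ℝ E = m + 1)]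

lemma integrableOn_sphere_dist_rpow {x : E} (hx : x ∉ sphere (0 : E) 1) (p : ℝ) :
    IntegrableOn (fun w => dist x w ^ p) (sphere 0 1) μH[m] := by
  have : FiniteDimensional ℝ E := .of_fact_finrank_eq_succ m
  have hcont : ContinuousOn (fun w => dist x w ^ p) (sphere (0 : E) 1) :=
    (continuous_const.dist continuous_id).continuousOn.rpow_const fun w hw =>
      .inl (dist_ne_zero.2 fun h => hx (h ▸ hw))
  obtain ⟨C, hC⟩ := (isCompact_sphere (0 : E) 1).exists_bound_of_continuousOn hcont
  exact .of_bound hausdorffMeasure_sphere_lt_top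
    (hcont.aestronglyMeasurable isClosed_sphere.measurableSet) C
    (ae_restrict_of_forall_mem isClosed_sphere.measurableSet hC)

variable (E) in
lemma exists_mul_rpow_le_integral_sphere_dist_rpow (p : ℝ) :
    ∃ c > 0, ∀ x ∈ ball (0 : E) 1,
      c * (1 - ‖x‖) ^ (p + m) ≤ ∫ w in sphere 0 1, dist x w ^ p ∂μH[m] := by
  have : Nontrivial E := nontrivial_of_finrank_eq_succ (R := ℝ) (n := m) Fact.out
  obtain ⟨c, hc, hcap⟩ := exists_mul_pow_le_hausdorffMeasure_real_cap (E := E) (m := m)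
  refine ⟨min 1 (2 ^ p) * c, by positivity, fun x hx => ?_⟩
  have hx1 : ‖x‖ < 1 := mem_ball_zero_iff.1 hx
  have hr : 0 < 1 - ‖x‖ := sub_pos.2 hx1
  obtain ⟨e, he, hxe⟩ := exists_norm_eq_one_and_dist_eq_one_sub_norm hx1.le
  have hr2 : 1 - ‖x‖ ≤ 2 := by linarith [norm_nonneg x]
  set r := 1 - ‖x‖
  let cap := sphere 0 1 ∩ closedBall e r
  have hint : IntegrableOn (fun w => dist x w ^ p) (sphere 0 1) μH[m] :=
    integrableOn_sphere_dist_rpow (fun h => hx1.ne (mem_sphere_zero_iff_norm.1 h)) p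
  have hfinite : μH[m] cap ≠ ⊤ :=
    ((measure_mono inter_subset_left).trans_lt hausdorffMeasure_sphere_lt_top).ne
  have hle : ∀ w ∈ cap, min 1 (2 ^ p) * r ^ p ≤ dist x w ^ p := fun w hw =>
    min_one_rpow_mul_rpow_le_rpow hr (one_sub_norm_le_dist_of_mem_sphere x hw.1)
      (by linarith [dist_triangle_right x w e, mem_closedBall.1 hw.2]) p
  calc min 1 (2 ^ p) * c * r ^ (p + m) = min 1 (2 ^ p) * r ^ p * (c * r ^ m) := by
        rw [Real.rpow_add hr, Real.rpow_natCast]; ring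
    _ ≤ min 1 (2 ^ p) * r ^ p * μH[m].real cap := by
        gcongr
        exact hcap e he r ⟨hr, hr2⟩
    _ ≤ ∫ w in cap, dist x w ^ p ∂μH[m] :=
        setIntegral_ge_of_const_le_real (isClosed_sphere.inter isClosed_closedBall).measurableSet
          hfinite hle (hint.mono_set inter_subset_left)
    _ ≤ ∫ w in sphere 0 1, dist x w ^ p ∂μH[m] :=
        setIntegral_mono_set hint (.of_forall fun w => by positivity)
          inter_subset_left.eventuallyLE

variable (E) in
theorem stmt9_general (α : ℝ) :
    ∃ c > 0, ∀ x ∈ ball (0 : E) 1,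
      c * (1 - ‖x‖) ^ (α / 2 - 1) ≤
        ∫ w in sphere 0 1, (1 - ‖x‖ ^ 2) ^ (α / 2) * dist x w ^ (-((m + 1 : ℕ) : ℝ)) ∂μH[m] := by
  obtain ⟨c, hc, hle⟩ :=
    exists_mul_rpow_le_integral_sphere_dist_rpow E (m := m) (-((m + 1 : ℕ) : ℝ))
  refine ⟨min 1 (2 ^ (α / 2)) * c, by positivity, fun x hx => ?_⟩
  have hx0 : 0 ≤ ‖x‖ := norm_nonneg x
  have hr : 0 < 1 - ‖x‖ := sub_pos.2 (mem_ball_zero_iff.1 hx)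
  have hprefactor : min 1 (2 ^ (α / 2)) * (1 - ‖x‖) ^ (α / 2) ≤ (1 - ‖x‖ ^ 2) ^ (α / 2) :=
    min_one_rpow_mul_rpow_le_rpow hr (by nlinarith) (by nlinarith) _
  have hexponent : -((m + 1 : ℕ) : ℝ) + m = -1 := by push_cast; ring
  calc min 1 (2 ^ (α / 2)) * c * (1 - ‖x‖) ^ (α / 2 - 1)
      = min 1 (2 ^ (α / 2)) * (1 - ‖x‖) ^ (α / 2)
          * (c * (1 - ‖x‖) ^ (-((m + 1 : ℕ) : ℝ) + m)) := by
        rw [hexponent, sub_eq_add_neg (α / 2), Real.rpow_add hr]; ring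
    _ ≤ (1 - ‖x‖ ^ 2) ^ (α / 2) * ∫ w in sphere 0 1, dist x w ^ (-((m + 1 : ℕ) : ℝ)) ∂μH[m] :=
        mul_le_mul hprefactor (hle x hx) (by positivity) (le_trans (by positivity) hprefactor)
    _ = _ := (integral_const_mul _ _).symm

end Integral

/-- there exists `c > 0` such that for every `x` in the open unit ball
`B ⊆ ℝⁿ`, `∫_S (1−|x|²)^{α/2} |x−w|^{−n} σ(dw) ≥ c (1−|x|)^{α/2−1}`, where `σ` is the
(n−1)-dimensional surface (Hausdorff) measure on the unit sphere `S`. -/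
theorem stmt9 (n : ℕ) (hn : 2 ≤ n) (α : ℝ) (hα : α ∈ Set.Ioo (0 : ℝ) 2) :
    ∃ c : ℝ, 0 < c ∧
      ∀ x ∈ ball (0 : EuclideanSpace ℝ (Fin n)) 1,
        (∫ w in sphere (0 : EuclideanSpace ℝ (Fin n)) 1,
            (1 - ‖x‖ ^ 2) ^ (α / 2) * dist x w ^ (-(n : ℝ)) ∂μH[(n : ℝ) - 1])
          ≥ c * (1 - ‖x‖) ^ (α / 2 - 1) := by
  obtain ⟨m, rfl⟩ := Nat.exists_eq_add_of_le' (one_le_two.trans hn)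
  have : Fact (finrank ℝ (EuclideanSpace ℝ (Fin (m + 1))) = m + 1) := ⟨finrank_euclideanSpace_fin⟩
  simpa using stmt9_general (EuclideanSpace ℝ (Fin (m + 1))) (m := m) α
end

section
/- Let α ∈ (0,2) and let B be the open unit disk in ℂ. For every ε > 0 there exists δ = δ(ε, α) > 0 with the following property: for every θ₀ ∈ ℝ, every λ ∈ (0, π), every 2π-periodic Borel measurable U : ℝ → [0,1] satisfying U(θ) = 1 whenever the distance from θ to θ₀ + 2πℤ is at most λ, and every ρ with max(0, 1−λδ) < ρ < 1, one has 1 − ε ≤ u_U(ρe^{iθ₀}) / h(ρe^{iθ₀}) ≤ 1. -/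
open MeasureTheory Set

/-- Martin kernel of the unit disk `B ⊆ ℂ` for the symmetric α-stable process,
normalized at the origin: `M(x, e^{iθ}) = (1−|x|²)^{α/2} |x − e^{iθ}|^{−2}`. -/
noncomputable def diskMartin (α : ℝ) (x : ℂ) (θ : ℝ) : ℝ :=
  (1 - ‖x‖ ^ 2) ^ (α / 2) / ‖x - Complex.exp (θ * Complex.I)‖ ^ 2

/-- `u_U(x) = (1/2π) ∫₀^{2π} M(x, e^{iθ}) U(θ) dθ`. -/
noncomputable def diskIntegral (α : ℝ) (U : ℝ → ℝ) (x : ℂ) : ℝ :=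
  (1 / (2 * Real.pi)) * ∫ θ in (0 : ℝ)..(2 * Real.pi), diskMartin α x θ * U θ

/-!
The factor `(1 - |x|²) ^ (α / 2)` of the Martin kernel does not depend on the boundary point, so it
cancels in `u_U / h`: the quotient is the Poisson integral of `U`, i.e. the case `α = 2` of `u_U`.
The Poisson kernel has total mass one and, at distance `> λ` from `θ₀`, is at most
`2π² (1 - ρ²) / (λ² + d²)` with `d` the arc distance. Integrating this Cauchy-type profile leaves at
most `π² (1 - ρ²) / λ` of the mass away from `θ₀`, which is below `ε` once `1 - ρ < λ ε / (2π²)`.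
-/

open Complex (exp I)
open InnerProductGeometry (angle)
open scoped Real

section ArcDistance

theorem angle_exp_exp_eq_norm_coe_sub (θ φ : ℝ) :
    angle (exp (θ * I)) (exp (φ * I)) = ‖((θ - φ : ℝ) : AddCircle (2 * π))‖ := by
  have hrep : |toIocMod Real.two_pi_pos (-π) (θ - φ)| ≤ |2 * π| / 2 := by
    have := toIocMod_mem_Ioc Real.two_pi_pos (-π) (θ - φ)
    rw [abs_of_pos Real.two_pi_pos, abs_le]
    constructor <;> linarith [this.1, this.2]
  have hcoe : ((toIocMod Real.two_pi_pos (-π) (θ - φ) : ℝ) : AddCircle (2 * π)) = (θ - φ : ℝ) :=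
    Real.Angle.coe_toIocMod _ _
  rw [Complex.angle_exp_exp, ← (AddCircle.norm_coe_eq_abs_iff _ Real.two_pi_pos.ne').2 hrep, hcoe]

theorem exists_abs_sub_two_pi_mul_le_of_norm_coe_le {t r : ℝ}
    (ht : ‖(t : AddCircle (2 * π))‖ ≤ r) : ∃ k : ℤ, |t - 2 * π * k| ≤ r :=
  ⟨round ((2 * π)⁻¹ * t), by rwa [mul_comm, ← AddCircle.norm_eq]⟩

theorem norm_coe_sub_le_pi_mul_norm_sub_exp {ρ : ℝ} (hρ : 0 ≤ ρ) (θ₀ θ : ℝ) :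
    ‖((θ - θ₀ : ℝ) : AddCircle (2 * π))‖ ≤ π * ‖ρ * exp (θ₀ * I) - exp (θ * I)‖ := by
  have hradial : ‖ρ * exp (θ₀ * I) - exp (θ₀ * I)‖ ≤ ‖ρ * exp (θ₀ * I) - exp (θ * I)‖ := by
    calc ‖ρ * exp (θ₀ * I) - exp (θ₀ * I)‖ = |ρ - 1| := by
          rw [← sub_one_mul, norm_mul, Complex.norm_exp_ofReal_mul_I, mul_one, ← Complex.ofReal_one,
            ← Complex.ofReal_sub, Complex.norm_real, Real.norm_eq_abs]
      _ = |‖ρ * exp (θ₀ * I)‖ - ‖exp (θ * I)‖| := by simp [abs_of_nonneg hρ]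
      _ ≤ ‖ρ * exp (θ₀ * I) - exp (θ * I)‖ := abs_norm_sub_norm_le _ _
  have hchord : ‖exp (θ * I) - exp (θ₀ * I)‖ ≤ 2 * ‖ρ * exp (θ₀ * I) - exp (θ * I)‖ := by
    have := norm_sub_le_norm_sub_add_norm_sub (exp (θ * I)) (ρ * exp (θ₀ * I)) (exp (θ₀ * I))
    rw [norm_sub_rev (exp (θ * I)) (ρ * exp (θ₀ * I))] at this
    linarith
  calc ‖((θ - θ₀ : ℝ) : AddCircle (2 * π))‖ = angle (exp (θ * I)) (exp (θ₀ * I)) :=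
        (angle_exp_exp_eq_norm_coe_sub θ θ₀).symm
    _ ≤ π / 2 * ‖exp (θ * I) - exp (θ₀ * I)‖ :=
        Complex.angle_le_mul_norm_sub (Complex.norm_exp_ofReal_mul_I θ)
          (Complex.norm_exp_ofReal_mul_I θ₀)
    _ ≤ π / 2 * (2 * ‖ρ * exp (θ₀ * I) - exp (θ * I)‖) := by gcongr
    _ = π * ‖ρ * exp (θ₀ * I) - exp (θ * I)‖ := by ring

theorem continuous_inv_sq_add_norm_coe_sub_sq {c : ℝ} (hc : c ≠ 0) (p θ₀ : ℝ) :
    Continuous fun θ : ℝ => (c ^ 2 + ‖((θ - θ₀ : ℝ) : AddCircle p)‖ ^ 2)⁻¹ := by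
  have : Continuous fun θ : ℝ => ((θ - θ₀ : ℝ) : AddCircle p) :=
    (AddCircle.continuous_mk' p).comp (continuous_sub_right θ₀)
  exact Continuous.inv₀ (by fun_prop) fun θ => by positivity

theorem integral_inv_sq_add_norm_coe_sub_sq_le {c : ℝ} (hc : 0 < c) {p : ℝ} (hp : 0 < p) (θ₀ : ℝ) :
    ∫ θ in (0 : ℝ)..p, (c ^ 2 + ‖((θ - θ₀ : ℝ) : AddCircle p)‖ ^ 2)⁻¹ ≤ π / c := by
  have hperiodic : Function.Periodic
      (fun t : ℝ => (c ^ 2 + ‖(t : AddCircle p)‖ ^ 2)⁻¹) p := fun t => by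
    simp only [AddCircle.coe_add_period]
  calc ∫ θ in (0 : ℝ)..p, (c ^ 2 + ‖((θ - θ₀ : ℝ) : AddCircle p)‖ ^ 2)⁻¹
      = ∫ t in (0 - θ₀)..(p - θ₀), (c ^ 2 + ‖(t : AddCircle p)‖ ^ 2)⁻¹ :=
        intervalIntegral.integral_comp_sub_right
          (fun t : ℝ => (c ^ 2 + ‖(t : AddCircle p)‖ ^ 2)⁻¹) θ₀
    _ = ∫ t in (-(p / 2))..(p / 2), (c ^ 2 + ‖(t : AddCircle p)‖ ^ 2)⁻¹ := by
        convert hperiodic.intervalIntegral_add_eq (0 - θ₀) (-(p / 2)) using 2 <;> ring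
    _ = ∫ t in (-(p / 2))..(p / 2), (c ^ 2 + t ^ 2)⁻¹ := by
        refine intervalIntegral.integral_congr fun t ht => ?_
        rw [uIcc_of_le (by linarith)] at ht
        have hnorm : ‖(t : AddCircle p)‖ = |t| :=
          (AddCircle.norm_coe_eq_abs_iff p hp.ne').2 (by rw [abs_of_pos hp]; exact abs_le.2 ht)
        simp only [hnorm, sq_abs]
    _ = c⁻¹ * (Real.arctan (p / 2 / c) - Real.arctan (-(p / 2) / c)) :=
        integral_inv_sq_add_sq hc.ne'
    _ ≤ c⁻¹ * (π / 2 - -(π / 2)) := by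
        gcongr
        · exact (Real.arctan_lt_pi_div_two _).le
        · exact (Real.neg_pi_div_two_lt_arctan _).le
    _ = π / c := by ring

end ArcDistance

section PoissonIntegral

variable {x : ℂ} {U : ℝ → ℝ}

theorem diskMartin_nonneg (α : ℝ) (hx : ‖x‖ ≤ 1) (θ : ℝ) : 0 ≤ diskMartin α x θ := by
  have : 0 ≤ 1 - ‖x‖ ^ 2 := sub_nonneg.2 (pow_le_one₀ (norm_nonneg x) hx)
  unfold diskMartin
  positivity

theorem diskMartin_two (x : ℂ) (θ : ℝ) :
    diskMartin 2 x θ = poissonKernel 0 x (circleMap 0 1 θ) := by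
  simp [diskMartin, poissonKernel, circleMap, norm_sub_rev x]

theorem continuous_diskMartin (α : ℝ) (hx : ‖x‖ < 1) : Continuous (diskMartin α x) := by
  have hne (θ : ℝ) : ‖x - exp (θ * I)‖ ^ 2 ≠ 0 := by
    refine pow_ne_zero 2 (norm_ne_zero_iff.2 (sub_ne_zero.2 fun h => hx.ne ?_))
    rw [h, Complex.norm_exp_ofReal_mul_I]
  exact Continuous.div (by fun_prop) (by fun_prop) hne

theorem intervalIntegrable_diskMartin_mul (α : ℝ) (hx : ‖x‖ < 1) {a b : ℝ}
    (hU : IntervalIntegrable U volume a b) :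
    IntervalIntegrable (fun θ => diskMartin α x θ * U θ) volume a b :=
  hU.continuousOn_mul (continuous_diskMartin α hx).continuousOn

theorem diskIntegral_two_one (hx : ‖x‖ < 1) : diskIntegral 2 (fun _ => 1) x = 1 := by
  have hmean : Real.circleAverage (poissonKernel 0 x • fun _ => (1 : ℝ)) 0 1 = 1 :=
    InnerProductSpace.HarmonicContOnCl.circleAverage_poissonKernel_smul
      InnerProductSpace.harmonicContOnCl_const (mem_ball_zero_iff.2 hx)
  simpa [diskIntegral, diskMartin_two, Real.circleAverage] using hmean

theorem diskIntegral_eq_rpow_mul_diskIntegral_two (α : ℝ) (U : ℝ → ℝ) (hx : ‖x‖ < 1) :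
    diskIntegral α U x = (1 - ‖x‖ ^ 2) ^ (α / 2 - 1) * diskIntegral 2 U x := by
  have hpos : 0 < 1 - ‖x‖ ^ 2 := sub_pos.2 (pow_lt_one₀ (norm_nonneg x) hx two_ne_zero)
  have hkernel (θ : ℝ) :
      diskMartin α x θ = (1 - ‖x‖ ^ 2) ^ (α / 2 - 1) * diskMartin 2 x θ := by
    rw [diskMartin, diskMartin, ← mul_div_assoc, ← Real.rpow_add hpos]
    ring_nf
  simp only [diskIntegral, hkernel, mul_assoc, intervalIntegral.integral_const_mul]
  ring

theorem diskIntegral_div_diskIntegral_one (α : ℝ) (U : ℝ → ℝ) (hx : ‖x‖ < 1) :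
    diskIntegral α U x / diskIntegral α (fun _ => 1) x = diskIntegral 2 U x := by
  have hpos : 0 < 1 - ‖x‖ ^ 2 := sub_pos.2 (pow_lt_one₀ (norm_nonneg x) hx two_ne_zero)
  rw [diskIntegral_eq_rpow_mul_diskIntegral_two α U hx,
    diskIntegral_eq_rpow_mul_diskIntegral_two α _ hx, diskIntegral_two_one hx, mul_one,
    mul_div_cancel_left₀ _ (Real.rpow_pos_of_pos hpos _).ne']

theorem one_sub_diskIntegral_two (hx : ‖x‖ < 1) (hU : IntervalIntegrable U volume 0 (2 * π)) :
    1 - diskIntegral 2 U x = diskIntegral 2 (fun θ => 1 - U θ) x := by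
  calc 1 - diskIntegral 2 U x = diskIntegral 2 (fun _ => 1) x - diskIntegral 2 U x := by
        rw [diskIntegral_two_one hx]
    _ = diskIntegral 2 (fun θ => 1 - U θ) x := by
        simp only [diskIntegral, mul_sub]
        rw [intervalIntegral.integral_sub
          (intervalIntegrable_diskMartin_mul 2 hx intervalIntegrable_const)
          (intervalIntegrable_diskMartin_mul 2 hx hU), mul_sub]

theorem diskIntegral_two_le_one (hx : ‖x‖ < 1) (hU : IntervalIntegrable U volume 0 (2 * π))
    (hU_le : ∀ θ, U θ ≤ 1) : diskIntegral 2 U x ≤ 1 := by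
  rw [← sub_nonneg, one_sub_diskIntegral_two hx hU]
  refine mul_nonneg (by positivity) ?_
  exact intervalIntegral.integral_nonneg Real.two_pi_pos.le fun θ _ =>
    mul_nonneg (diskMartin_nonneg 2 hx.le θ) (sub_nonneg.2 (hU_le θ))

end PoissonIntegral

section Localization

variable {ρ lam θ₀ : ℝ} {U : ℝ → ℝ}

theorem norm_ofReal_mul_exp_ofReal_mul_I (hρ : 0 ≤ ρ) (θ : ℝ) : ‖ρ * exp (θ * I)‖ = ρ := by
  simp [abs_of_nonneg hρ]

theorem diskMartin_two_le_of_le_norm_coe_sub (hρ : 0 ≤ ρ) (hρ1 : ρ ≤ 1) (hlam : 0 < lam) {θ : ℝ}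
    (hθ : lam ≤ ‖((θ - θ₀ : ℝ) : AddCircle (2 * π))‖) :
    diskMartin 2 (ρ * exp (θ₀ * I)) θ ≤
      2 * π ^ 2 * (1 - ρ ^ 2) * (lam ^ 2 + ‖((θ - θ₀ : ℝ) : AddCircle (2 * π))‖ ^ 2)⁻¹ := by
  have hmass : 0 ≤ 1 - ρ ^ 2 := sub_nonneg.2 (pow_le_one₀ hρ hρ1)
  set d := ‖((θ - θ₀ : ℝ) : AddCircle (2 * π))‖
  set r := ‖ρ * exp (θ₀ * I) - exp (θ * I)‖
  have hd : d ≤ π * r := norm_coe_sub_le_pi_mul_norm_sub_exp hρ θ₀ θ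
  have hr : 0 < r := pos_of_mul_pos_right (hlam.trans_le (hθ.trans hd)) Real.pi_pos.le
  have hdenom : lam ^ 2 + d ^ 2 ≤ 2 * π ^ 2 * r ^ 2 := by
    calc lam ^ 2 + d ^ 2 ≤ (π * r) ^ 2 + (π * r) ^ 2 := by gcongr; exact hθ.trans hd
      _ = 2 * π ^ 2 * r ^ 2 := by ring
  have hkernel : diskMartin 2 (ρ * exp (θ₀ * I)) θ = (1 - ρ ^ 2) / r ^ 2 := by
    rw [diskMartin, norm_ofReal_mul_exp_ofReal_mul_I hρ, div_self two_ne_zero, Real.rpow_one]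
  rw [hkernel, ← div_eq_mul_inv, div_le_div_iff₀ (by positivity) (by positivity)]
  calc (1 - ρ ^ 2) * (lam ^ 2 + d ^ 2) ≤ (1 - ρ ^ 2) * (2 * π ^ 2 * r ^ 2) := by gcongr
    _ = 2 * π ^ 2 * (1 - ρ ^ 2) * r ^ 2 := by ring

theorem diskMartin_two_mul_one_sub_le (hρ : 0 ≤ ρ) (hρ1 : ρ ≤ 1) (hlam : 0 < lam)
    (hU_nonneg : ∀ θ, 0 ≤ U θ)
    (hU_eq : ∀ θ, ‖((θ - θ₀ : ℝ) : AddCircle (2 * π))‖ ≤ lam → U θ = 1) (θ : ℝ) :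
    diskMartin 2 (ρ * exp (θ₀ * I)) θ * (1 - U θ) ≤
      2 * π ^ 2 * (1 - ρ ^ 2) * (lam ^ 2 + ‖((θ - θ₀ : ℝ) : AddCircle (2 * π))‖ ^ 2)⁻¹ := by
  rcases le_total ‖((θ - θ₀ : ℝ) : AddCircle (2 * π))‖ lam with hnear | hfar
  · have hmass : 0 ≤ 1 - ρ ^ 2 := sub_nonneg.2 (pow_le_one₀ hρ hρ1)
    rw [hU_eq θ hnear, sub_self, mul_zero]
    positivity
  · have hnonneg : 0 ≤ diskMartin 2 (ρ * exp (θ₀ * I)) θ :=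
      diskMartin_nonneg 2 ((norm_ofReal_mul_exp_ofReal_mul_I hρ θ₀).trans_le hρ1) θ
    exact (mul_le_of_le_one_right hnonneg (sub_le_self 1 (hU_nonneg θ))).trans
      (diskMartin_two_le_of_le_norm_coe_sub hρ hρ1 hlam hfar)

theorem one_sub_diskIntegral_two_le (hρ : 0 ≤ ρ) (hρ1 : ρ < 1) (hlam : 0 < lam)
    (hU : IntervalIntegrable U volume 0 (2 * π)) (hU_nonneg : ∀ θ, 0 ≤ U θ)
    (hU_eq : ∀ θ, ‖((θ - θ₀ : ℝ) : AddCircle (2 * π))‖ ≤ lam → U θ = 1) :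
    1 - diskIntegral 2 U (ρ * exp (θ₀ * I)) ≤ π ^ 2 * (1 - ρ ^ 2) / lam := by
  have hx : ‖ρ * exp (θ₀ * I)‖ < 1 := by rwa [norm_ofReal_mul_exp_ofReal_mul_I hρ]
  have hmass : 0 ≤ 1 - ρ ^ 2 := sub_nonneg.2 (pow_le_one₀ hρ hρ1.le)
  calc 1 - diskIntegral 2 U (ρ * exp (θ₀ * I))
      = 1 / (2 * π) * ∫ θ in (0 : ℝ)..(2 * π),
          diskMartin 2 (ρ * exp (θ₀ * I)) θ * (1 - U θ) := one_sub_diskIntegral_two hx hU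
    _ ≤ 1 / (2 * π) * ∫ θ in (0 : ℝ)..(2 * π), 2 * π ^ 2 * (1 - ρ ^ 2) *
          (lam ^ 2 + ‖((θ - θ₀ : ℝ) : AddCircle (2 * π))‖ ^ 2)⁻¹ := by
        gcongr
        exact intervalIntegral.integral_mono Real.two_pi_pos.le
          (intervalIntegrable_diskMartin_mul 2 hx (intervalIntegrable_const.sub hU))
          (((continuous_inv_sq_add_norm_coe_sub_sq hlam.ne' _ _).const_mul _).intervalIntegrable
            _ _)
          (diskMartin_two_mul_one_sub_le hρ hρ1.le hlam hU_nonneg hU_eq)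
    _ ≤ 1 / (2 * π) * (2 * π ^ 2 * (1 - ρ ^ 2) * (π / lam)) := by
        rw [intervalIntegral.integral_const_mul]
        gcongr
        exact integral_inv_sq_add_norm_coe_sub_sq_le hlam Real.two_pi_pos θ₀
    _ = π ^ 2 * (1 - ρ ^ 2) / lam := by field_simp

end Localization

theorem stmt10_general (ε : ℝ) (hε : 0 < ε) :
    ∃ δ : ℝ, 0 < δ ∧
      ∀ α θ₀ lam : ℝ, ∀ U : ℝ → ℝ, AEMeasurable U → (∀ θ, U θ ∈ Icc (0 : ℝ) 1) →
        (∀ θ : ℝ, (∃ k : ℤ, |θ - θ₀ - 2 * π * k| ≤ lam) → U θ = 1) →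
        ∀ ρ : ℝ, max 0 (1 - lam * δ) < ρ → ρ < 1 →
          1 - ε ≤ diskIntegral α U (ρ * exp (θ₀ * I)) /
              diskIntegral α (fun _ => 1) (ρ * exp (θ₀ * I)) ∧
            diskIntegral α U (ρ * exp (θ₀ * I)) /
              diskIntegral α (fun _ => 1) (ρ * exp (θ₀ * I)) ≤ 1 := by
  have hδ : 0 < ε / (2 * π ^ 2) := by positivity
  refine ⟨ε / (2 * π ^ 2), hδ, fun α θ₀ lam U hU hU01 hU1 ρ hρ hρ1 => ?_⟩
  obtain ⟨hρ0, hclose⟩ := max_lt_iff.1 hρ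
  have hlam : 0 < lam := pos_of_mul_pos_left (by linarith) hδ.le
  have hx : ‖ρ * exp (θ₀ * I)‖ < 1 := by rwa [norm_ofReal_mul_exp_ofReal_mul_I hρ0.le]
  have hUint : IntervalIntegrable U volume 0 (2 * π) :=
    (intervalIntegrable_iff_integrableOn_Ioc_of_le Real.two_pi_pos.le).2
      (Integrable.of_mem_Icc 0 1 hU.restrict (ae_of_all _ hU01))
  rw [diskIntegral_div_diskIntegral_one α U hx]
  refine ⟨?_, diskIntegral_two_le_one hx hUint fun θ => (hU01 θ).2⟩
  have hdefect := one_sub_diskIntegral_two_le hρ0.le hρ1 hlam hUint (fun θ => (hU01 θ).1)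
    fun θ hθ => hU1 θ (exists_abs_sub_two_pi_mul_le_of_norm_coe_le hθ)
  suffices π ^ 2 * (1 - ρ ^ 2) / lam ≤ ε by linarith
  calc π ^ 2 * (1 - ρ ^ 2) / lam = π ^ 2 * ((1 + ρ) * (1 - ρ)) / lam := by ring
    _ ≤ π ^ 2 * (2 * (lam * (ε / (2 * π ^ 2)))) / lam := by gcongr <;> linarith
    _ = ε := by field_simp

/-- for every `ε > 0` there is `δ = δ(ε,α) > 0` such that for every
`θ₀ ∈ ℝ`, `λ ∈ (0,π)`, every 2π-periodic Borel `U : ℝ → [0,1]` with `U ≡ 1` at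
distance at most `λ` from `θ₀ + 2πℤ`, and every `ρ` with `max 0 (1−λδ) < ρ < 1`,
one has `1 − ε ≤ u_U(ρe^{iθ₀}) / h(ρe^{iθ₀}) ≤ 1` (where `h = u_1`). -/
theorem stmt10 (α : ℝ) (hα : α ∈ Set.Ioo (0 : ℝ) 2) (ε : ℝ) (hε : 0 < ε) :
    ∃ δ : ℝ, 0 < δ ∧
      ∀ θ₀ lam : ℝ, lam ∈ Set.Ioo 0 Real.pi →
        ∀ U : ℝ → ℝ, Measurable U → (∀ θ, U θ ∈ Set.Icc (0 : ℝ) 1) →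
          Function.Periodic U (2 * Real.pi) →
          (∀ θ : ℝ, (∃ k : ℤ, |θ - θ₀ - 2 * Real.pi * k| ≤ lam) → U θ = 1) →
          ∀ ρ : ℝ, max 0 (1 - lam * δ) < ρ → ρ < 1 →
            1 - ε ≤ diskIntegral α U ((ρ : ℂ) * Complex.exp (θ₀ * Complex.I)) /
                diskIntegral α (fun _ => 1) ((ρ : ℂ) * Complex.exp (θ₀ * Complex.I)) ∧
              diskIntegral α U ((ρ : ℂ) * Complex.exp (θ₀ * Complex.I)) /
                diskIntegral α (fun _ => 1) ((ρ : ℂ) * Complex.exp (θ₀ * Complex.I))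
                ≤ 1 :=
  let ⟨δ, hδ, H⟩ := stmt10_general ε hε
  ⟨δ, hδ, fun θ₀ lam _ U hU hU01 _ hU1 => H α θ₀ lam U hU.aemeasurable hU01 hU1⟩
end
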